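/- arXiv:1608.03499 — 3 statements merged into one kernel-verified Lean document; each statement's English description precedes it below -/
import Mathlib

section
/- Let n ≥ 4 be even and char k ≠ 2, and let φ_1, …, φ_N (N = 2^{c_{n−1}}) be ℤ₂-twistings such that the φ_i(I_n) are pairwise distinct and J_n = ∩_{i=1}^N φ_i(I_n). Then for every l ∈ {1,…,N}: ∩_{i ≠ l} φ_i(I_n) = J_n + ⟨ φ_l(p^+_n) ⟩, a single additional generator; moreover p^+_n is V_n-homogeneous of V_n-degree (n−2,…,n−2) and of total degree n(n−2)/2. -/
open scoped BigOperators

namespace Veronese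

open MvPolynomial

/-- `c m = C(m,2)`. -/
def c (m : ℕ) : ℕ := m.choose 2

variable (n : ℕ)

/-- multiplicity (as ℤ) of the index `i` in the unordered pair `s`. -/
def wt (s : Sym2 (Fin n)) : Fin n → ℤ :=
  Sym2.lift ⟨fun a b i => (if i = a then 1 else 0) + (if i = b then 1 else 0),
    fun a b => funext fun i => add_comm _ _⟩ s

/-- The Veronese grading map `V_n : ℤ^P → ℤ^n`, sending `e_{ij} ↦ e_i + e_j`. -/
def Vmap : (Sym2 (Fin n) → ℤ) →ₗ[ℤ] (Fin n → ℤ) where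
  toFun u := fun i => ∑ s : Sym2 (Fin n), u s * wt n s i
  map_add' u v := funext fun i => by
    simp [add_mul, Finset.sum_add_distrib]
  map_smul' m u := funext fun i => by
    simp [Finset.mul_sum, smul_eq_mul, mul_assoc]

/-- The Veronese lattice `L_n = ker V_n`. -/
def Llat : Submodule ℤ (Sym2 (Fin n) → ℤ) := LinearMap.ker (Vmap n)

/-- standard basis vector `e_{ij}` of `ℤ^P`. -/
def e (i j : Fin n) : Sym2 (Fin n) → ℤ := Pi.single s(i, j) 1

lemma e_comm (i j : Fin n) : e n i j = e n j i := by
  unfold e; rw [Sym2.eq_swap]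

/-- `[ij|ij] = e_{ii} + e_{jj} - 2 e_{ij}`. -/
def minorVec (i j : Fin n) : Sym2 (Fin n) → ℤ := e n i i + e n j j - 2 • e n i j

/-- The principal minor lattice `L'_n`. -/
def L'lat : Submodule ℤ (Sym2 (Fin n) → ℤ) :=
  Submodule.span ℤ {v | ∃ i j : Fin n, i < j ∧ v = minorVec n i j}

/-- the last index `n` (zero-based: `n-1`) of `Fin n`. -/
def lastIdx (hn : 0 < n) : Fin n := ⟨n - 1, Nat.sub_lt hn one_pos⟩

/-- embedding `[n-1] → [n]`. -/
def ι : Fin (n - 1) → Fin n := Fin.castLE (Nat.sub_le n 1)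

/-- `[in|jn] = e_{ij} + e_{nn} - e_{in} - e_{jn}` for `i,j ∈ [n-1]`. -/
def Bvec (hn : 0 < n) : Sym2 (Fin (n - 1)) → (Sym2 (Fin n) → ℤ) :=
  Sym2.lift ⟨fun i j =>
      e n (ι n i) (ι n j) + e n (lastIdx n hn) (lastIdx n hn)
        - e n (ι n i) (lastIdx n hn) - e n (ι n j) (lastIdx n hn),
    fun i j => by dsimp only; rw [e_comm n (ι n i) (ι n j)]; ring⟩

/-- The family `B'`: `[in|in]` on the diagonal, `2[in|jn]` off it. -/
noncomputable def B'vec (hn : 0 < n) (s : Sym2 (Fin (n - 1))) : Sym2 (Fin n) → ℤ :=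
  if s.IsDiag then Bvec n hn s else 2 • Bvec n hn s

/-- multiplicity (as ℕ) of the index `i` in the unordered pair `s`. -/
def wtN (s : Sym2 (Fin n)) : Fin n → ℕ :=
  Sym2.lift ⟨fun a b i => (if i = a then 1 else 0) + (if i = b then 1 else 0),
    fun a b => funext fun i => add_comm _ _⟩ s

/-- The Veronese degree of an exponent vector `u ∈ ℕ^P`. -/
def VN (u : Sym2 (Fin n) →₀ ℕ) : Fin n → ℕ := fun i => ∑ s : Sym2 (Fin n), u s * wtN n s i

/-- The fiber `V_n^{-1}[b] = {u ∈ ℕ^P : V_n u = b}`. -/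
def fiber (b : Fin n → ℕ) : Set (Sym2 (Fin n) →₀ ℕ) := {u | VN n u = b}

/-- natural inclusion `ℕ^P → ℤ^P`. -/
def toZ (u : Sym2 (Fin n) →₀ ℕ) : Sym2 (Fin n) → ℤ := fun s => (u s : ℤ)

lemma fiber_finite (b : Fin n → ℕ) : (fiber n b).Finite := by
  classical
  have hsub : fiber n b ⊆
      ↑(Finset.Iic ((Finsupp.equivFunOnFinite.symm fun _ => ∑ i, b i) : Sym2 (Fin n) →₀ ℕ)) := by
    intro u hu
    simp only [Finset.coe_Iic, Set.mem_Iic, Finsupp.le_def]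
    intro s
    induction s using Sym2.ind with
    | _ i j =>
      have h1 : u s(i, j) * wtN n s(i, j) i ≤ VN n u i :=
        Finset.single_le_sum (f := fun s => u s * wtN n s i)
          (fun s _ => Nat.zero_le _) (Finset.mem_univ s(i, j))
      have h2 : 1 ≤ wtN n s(i, j) i := by
        simp only [wtN, Sym2.lift_mk, if_pos rfl]
        exact Nat.le_add_right 1 _
      have h3 : u s(i, j) ≤ b i := by
        have hb : VN n u i = b i := congrFun hu i
        calc u s(i, j) ≤ u s(i, j) * wtN n s(i, j) i := Nat.le_mul_of_pos_right _ h2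
          _ ≤ VN n u i := h1
          _ = b i := hb
      calc u s(i, j) ≤ b i := h3
        _ ≤ ∑ i, b i := Finset.single_le_sum (fun _ _ => Nat.zero_le _) (Finset.mem_univ _)
        _ = (Finsupp.equivFunOnFinite.symm fun _ => ∑ i, b i) s(i, j) := by
            simp
  exact Set.Finite.subset (Finset.finite_toSet _) hsub

variable (k : Type*) [Field k]

/-- the polynomial ring `k[x_{ij}]`. -/
abbrev R := MvPolynomial (Sym2 (Fin n)) k

/-- The principal minor ideal `J_n`. -/
noncomputable def Jideal : Ideal (R n k) :=
  Ideal.span {f | ∃ i j : Fin n, i < j ∧ f = X s(i, i) * X s(j, j) - X s(i, j) ^ 2}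

/-- The map `x_{ij} ↦ t_i t_j`. -/
noncomputable def veroHom : R n k →ₐ[k] MvPolynomial (Fin n) k :=
  aeval fun s => Sym2.lift ⟨fun a b => X a * X b, fun a b => mul_comm _ _⟩ s

/-- The second Veronese ideal `I_n`. -/
noncomputable def Iideal : Ideal (R n k) := RingHom.ker (veroHom n k)

/-- A ℤ₂-twisting: an automorphism sending each variable to ± itself. -/
def IsTwisting (φ : R n k ≃ₐ[k] R n k) : Prop :=
  ∀ s : Sym2 (Fin n), φ (X s) = X s ∨ φ (X s) = - X s

/-- `f` is V_n-homogeneous of degree `b`. -/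
def VHomog (f : R n k) (b : Fin n → ℕ) : Prop := ∀ u ∈ f.support, VN n u = b

/-- The fiber over `b` as a finite set. -/
noncomputable def fiberFinset (b : Fin n → ℕ) : Finset (Sym2 (Fin n) →₀ ℕ) :=
  (fiber_finite n b).toFinset

/-- generating function of the canonical (0/1 off-diagonal) representatives of
the fiber over `b`. -/
noncomputable def pplusAt (b : Fin n → ℕ) : R n k :=
  ∑ u ∈ (fiberFinset n b).filter (fun u => ∀ s : Sym2 (Fin n), ¬s.IsDiag → u s ≤ 1),
    monomial u (1 : k)

/-- `p⁺_{n,j}` (for `n` odd): fiber over `(n-2,…,n-2) + e_j`. -/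
noncomputable def pplusOdd (j : Fin n) : R n k :=
  pplusAt n k fun i => (n - 2) + if i = j then 1 else 0

/-- `p⁺_n` (for `n` even): fiber over `(n-2,…,n-2)`. -/
noncomputable def pplusEven : R n k :=
  pplusAt n k fun _ => n - 2

/-- `p_n = ∏_{i<j∈[n-1]} (x_{ij} x_{nn} + x_{in} x_{jn})`. -/
noncomputable def pn (hn : 0 < n) : R n k :=
  ∏ p ∈ Finset.univ.filter (fun p : Fin (n - 1) × Fin (n - 1) => p.1 < p.2),
    (X s(ι n p.1, ι n p.2) * X s(lastIdx n hn, lastIdx n hn)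
      + X s(ι n p.1, lastIdx n hn) * X s(ι n p.2, lastIdx n hn))

/-!
Rescaling the variables by `x_{ij} ↦ δ η_i η_j x_{ij}` with signs `δ`, `η_i` fixes `I_n` and
changes `V_n`-homogeneous polynomials only by a sign. Up to such a rescaling, a twisting whose ideal
contains `J_n` is `1` on all loops and on all edges at a fixed vertex `L`, hence is given by
arbitrary signs on the `C(n-1,2)` core edges, the edges avoiding `L`; by counting, each of these
sign vectors occurs exactly once.

A canonical representative in a fiber of degree at least `(n-2,…,n-2)` is determined by the core
edges it uses, and every set of core edges occurs. So `x_{ij} ↦ t_i t_j` sends the twist of `p⁺_n`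
by `σ` to `t^(n-2,…,n-2) * ∏ (1 + σ s)` over the core edges `s`, which vanishes unless `σ = 1`.
Now let `f` lie in all components but the one of `σ₀`, and let `F` be the image of its twist by
`σ₀`. Summing over all sign vectors against the character of a graph `G` of large degree at a
vertex `i` shows, by orthogonality, that every exponent of `F` is at least `n - 2`. Hence `F` is
also the image of a multiple of `p⁺_n`, and subtracting the twist of that multiple puts `f` into
`J_n`.
-/

section VeroneseDegree

variable {n}

lemma VN_add (u v : Sym2 (Fin n) →₀ ℕ) : VN n (u + v) = VN n u + VN n v := by
  ext i
  simp [VN, add_mul, Finset.sum_add_distrib]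

lemma VN_single (s : Sym2 (Fin n)) (m : ℕ) (i : Fin n) :
    VN n (Finsupp.single s m) i = m * wtN n s i := by
  simp [VN, Finsupp.single_apply]

lemma VN_apply_eq_two_mul_add_sum_erase (u : Sym2 (Fin n) →₀ ℕ) (i : Fin n) :
    VN n u i = 2 * u s(i, i) + ∑ j ∈ Finset.univ.erase i, u s(i, j) := by
  have hterm (j : Fin n) : u s(i, j) * wtN n s(i, j) i = u s(i, j) * (if j = i then 2 else 1) := by
    by_cases hj : j = i
    · simp [wtN, hj]
    · simp [wtN, hj, Ne.symm hj]
  calc VN n u i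
      = ∑ s ∈ Finset.univ.image (fun j => s(i, j)), u s * wtN n s i := by
        refine (Finset.sum_subset (Finset.subset_univ _) fun s _ hs => ?_).symm
        induction s with
        | _ a b =>
          have ha : i ≠ a := fun h => hs (by simp [h])
          have hb : i ≠ b := fun h => hs (by simp [h])
          simp [wtN, ha, hb]
    _ = ∑ j, u s(i, j) * (if j = i then 2 else 1) := by
        rw [Finset.sum_image fun j _ j' _ h => Sym2.congr_right.1 h]
        exact Finset.sum_congr rfl fun j _ => hterm j
    _ = 2 * u s(i, i) + ∑ j ∈ Finset.univ.erase i, u s(i, j) := by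
        rw [← Finset.add_sum_erase _ _ (Finset.mem_univ i), if_pos rfl, mul_comm]
        refine congrArg _ (Finset.sum_congr rfl fun j hj => ?_)
        rw [if_neg (Finset.ne_of_mem_erase hj), mul_one]

lemma prod_pow_wtN {M : Type*} [CommMonoid M] (g : Fin n → M) (a b : Fin n) :
    ∏ i, g i ^ wtN n s(a, b) i = g a * g b := by
  simp only [wtN, Sym2.lift_mk, pow_add, Finset.prod_mul_distrib, pow_ite, pow_one, pow_zero,
    Finset.prod_ite_eq', Finset.mem_univ, if_true]

lemma prod_prod_pow_wtN_pow {M : Type*} [CommMonoid M] (g : Fin n → M)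
    (u : Sym2 (Fin n) →₀ ℕ) : ∏ s, (∏ i, g i ^ wtN n s i) ^ u s = ∏ i, g i ^ VN n u i := by
  simp only [VN, ← Finset.prod_pow, ← Finset.prod_pow_eq_pow_sum, ← pow_mul, mul_comm (u _)]
  exact Finset.prod_comm

lemma sum_VN (u : Sym2 (Fin n) →₀ ℕ) : ∑ i, VN n u i = 2 * ∑ s, u s := by
  have hwt (s : Sym2 (Fin n)) : ∑ i, wtN n s i = 2 := by
    induction s with
    | _ a b => simp [wtN, Finset.sum_add_distrib]
  simp only [VN]
  rw [Finset.sum_comm, Finset.mul_sum]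
  simp only [← Finset.mul_sum, hwt, mul_comm 2]

lemma even_sum_VN (u : Sym2 (Fin n) →₀ ℕ) : Even (∑ i, VN n u i) :=
  sum_VN u ▸ even_two_mul _

lemma exists_VN_eq {b : Fin n → ℕ} (hb : Even (∑ i, b i)) : ∃ u, VN n u = b := by
  have exists_eq_add_single {b : Fin n → ℕ} (hb : ∑ i, b i ≠ 0) :
      ∃ (i : Fin n) (b' : Fin n → ℕ), b = b' + Pi.single i 1 := by
    obtain ⟨i, -, hi⟩ := Finset.exists_ne_zero_of_sum_ne_zero hb
    refine ⟨i, b - Pi.single i 1, (tsub_add_cancel_of_le fun j => ?_).symm⟩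
    rcases eq_or_ne j i with rfl | hj
    · simpa using Nat.one_le_iff_ne_zero.2 hi
    · simp [hj]
  obtain ⟨m, hm⟩ := hb
  induction m generalizing b with
  | zero => exact ⟨0, by simpa [VN, funext_iff, eq_comm] using hm⟩
  | succ m ih =>
    obtain ⟨i, b', rfl⟩ := exists_eq_add_single (b := b) (by omega)
    simp only [Pi.add_apply, Finset.sum_add_distrib, Finset.sum_pi_single', Finset.mem_univ,
      if_true] at hm
    obtain ⟨j, b'', rfl⟩ := exists_eq_add_single (b := b') (by omega)
    simp only [Pi.add_apply, Finset.sum_add_distrib, Finset.sum_pi_single', Finset.mem_univ,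
      if_true] at hm
    obtain ⟨u, rfl⟩ := ih (b := b'') (by omega)
    refine ⟨u + Finsupp.single s(i, j) 1, ?_⟩
    ext a
    simp only [VN_add, Pi.add_apply, VN_single, wtN, Sym2.lift_mk, Pi.single_apply, one_mul]
    ring

/-- The Veronese degree `VN`, bundled as an additive map into exponent vectors of
`k[t_1, …, t_n]`. -/
noncomputable def veroDegree : (Sym2 (Fin n) →₀ ℕ) →+ (Fin n →₀ ℕ) where
  toFun u := Finsupp.equivFunOnFinite.symm (VN n u)
  map_zero' := by ext; simp [VN]
  map_add' u v := by ext; simp [VN_add]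

lemma coe_veroDegree (u : Sym2 (Fin n) →₀ ℕ) : ⇑(veroDegree u) = VN n u := rfl

lemma veroDegree_eq_iff {u : Sym2 (Fin n) →₀ ℕ} {b : Fin n →₀ ℕ} :
    veroDegree u = b ↔ VN n u = b := DFunLike.coe_injective.eq_iff.symm

end VeroneseDegree

section CanonicalRepresentatives

variable {n}

/-- The pairs of distinct indices avoiding `L`: the edges of the complete graph on
`Fin n \ {L}`. -/
def coreEdges (L : Fin n) : Finset (Sym2 (Fin n)) :=
  (Finset.univ.erase L).offDiag.image (Function.uncurry Sym2.mk)

lemma mk_mem_coreEdges {L a b : Fin n} : s(a, b) ∈ coreEdges L ↔ a ≠ L ∧ b ≠ L ∧ a ≠ b := by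
  simp only [coreEdges, Finset.mem_image, Finset.mem_offDiag, Finset.mem_erase, Finset.mem_univ,
    and_true, Prod.exists, Function.uncurry_apply_pair]
  constructor
  · rintro ⟨a', b', ⟨ha, hb, hab⟩, h⟩
    rcases Sym2.eq_iff.1 h with ⟨rfl, rfl⟩ | ⟨rfl, rfl⟩
    exacts [⟨ha, hb, hab⟩, ⟨hb, ha, hab.symm⟩]
  · exact fun h => ⟨a, b, h, rfl⟩

lemma not_isDiag_of_mem_coreEdges {L : Fin n} {s : Sym2 (Fin n)} (hs : s ∈ coreEdges L) :
    ¬ s.IsDiag := by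
  induction s with
  | _ a b => exact (mk_mem_coreEdges.1 hs).2.2

lemma notMem_of_mem_coreEdges {L : Fin n} {s : Sym2 (Fin n)} (hs : s ∈ coreEdges L) : L ∉ s := by
  induction s with
  | _ a b =>
    obtain ⟨ha, hb, -⟩ := mk_mem_coreEdges.1 hs
    simp [ha.symm, hb.symm]

lemma mk_self_notMem_coreEdges (L a : Fin n) : s(a, a) ∉ coreEdges L :=
  fun h => (mk_mem_coreEdges.1 h).2.2 rfl

lemma mk_notMem_coreEdges (L a : Fin n) : s(a, L) ∉ coreEdges L :=
  fun h => (mk_mem_coreEdges.1 h).2.1 rfl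

lemma card_coreEdges (L : Fin n) : (coreEdges L).card = (n - 1).choose 2 := by
  rw [coreEdges, Sym2.card_image_offDiag, Finset.card_erase_of_mem (Finset.mem_univ L),
    Finset.card_fin]

/-- A vertex `a ≠ L` sees only one edge outside the core, so the parity of its degree determines
the parity of that edge. -/
lemma even_apply_of_even_on_coreEdges {L : Fin n} {u : Sym2 (Fin n) →₀ ℕ}
    (hcore : ∀ s ∈ coreEdges L, Even (u s)) (hdeg : ∀ a, Even (VN n u a))
    {s : Sym2 (Fin n)} (hs : ¬ s.IsDiag) : Even (u s) := by
  have hspoke {a : Fin n} (ha : a ≠ L) : Even (u s(a, L)) := by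
    have hL : L ∈ Finset.univ.erase a := by simp [ha.symm]
    have h := hdeg a
    rw [VN_apply_eq_two_mul_add_sum_erase, ← Finset.add_sum_erase _ _ hL, Nat.even_add,
      Nat.even_add] at h
    refine (h.1 (even_two_mul _)).2 (Finset.even_sum _ fun j hj => hcore _ ?_)
    simp only [Finset.mem_erase, Finset.mem_univ, and_true] at hj
    exact mk_mem_coreEdges.2 ⟨ha, hj.1, hj.2.symm⟩
  induction s with
  | _ a b =>
    have hab : a ≠ b := hs
    by_cases ha : a = L
    · rw [ha, Sym2.eq_swap]
      exact hspoke fun hb => hab (ha.trans hb.symm)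
    by_cases hb : b = L
    · exact hb ▸ hspoke ha
    exact hcore _ (mk_mem_coreEdges.2 ⟨ha, hb, hab⟩)

lemma even_apply_of_forall_ne {α : Type*} [Fintype α] {f : α → ℕ} {a : α}
    (hsum : Even (∑ i, f i)) (hne : ∀ i ≠ a, Even (f i)) : Even (f a) := by
  classical
  rw [← Finset.add_sum_erase _ _ (Finset.mem_univ a), Nat.even_add] at hsum
  exact hsum.2 (Finset.even_sum _ fun i hi => hne i (Finset.ne_of_mem_erase hi))

/-- The star centred at `L`, its edge `s(a, L)` having multiplicity `p a`. -/
noncomputable def starAt (L : Fin n) (p : Fin n →₀ ℕ) : Sym2 (Fin n) →₀ ℕ :=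
  p.mapDomain fun a => s(a, L)

lemma starAt_apply_mk (L : Fin n) (p : Fin n →₀ ℕ) (a : Fin n) : starAt L p s(a, L) = p a :=
  Finsupp.mapDomain_apply (fun _ _ => Sym2.congr_left.1) p a

lemma starAt_apply_of_notMem {L : Fin n} {s : Sym2 (Fin n)} (hs : L ∉ s) (p : Fin n →₀ ℕ) :
    starAt L p s = 0 := by
  refine Finsupp.mapDomain_of_notMem_range _ _ ?_
  rintro ⟨a, rfl⟩
  exact hs (Sym2.mem_mk_right a L)

lemma VN_starAt_of_ne {L a : Fin n} (ha : a ≠ L) (p : Fin n →₀ ℕ) :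
    VN n (starAt L p) a = p a := by
  have hloop : starAt L p s(a, a) = 0 := starAt_apply_of_notMem (by simp [ha.symm]) p
  rw [VN_apply_eq_two_mul_add_sum_erase, hloop, Finset.sum_eq_single_of_mem L (by simp [ha.symm]),
    starAt_apply_mk, mul_zero, zero_add]
  exact fun j _ hj => starAt_apply_of_notMem (by simp [ha.symm, hj.symm]) p

/-- The exponent vector of the monomial `∏ a, x_{aa} ^ q a`. -/
noncomputable def loops (q : Fin n →₀ ℕ) : Sym2 (Fin n) →₀ ℕ := q.mapDomain Sym2.diag

lemma loops_apply_of_not_isDiag {s : Sym2 (Fin n)} (hs : ¬ s.IsDiag) (q : Fin n →₀ ℕ) :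
    loops q s = 0 := by
  refine Finsupp.mapDomain_of_notMem_range _ _ ?_
  rintro ⟨a, rfl⟩
  exact hs (Sym2.diag_isDiag a)

lemma VN_loops (q : Fin n →₀ ℕ) (a : Fin n) : VN n (loops q) a = 2 * q a := by
  have hloop : loops q s(a, a) = q a := Finsupp.mapDomain_apply Sym2.diag_injective q a
  rw [VN_apply_eq_two_mul_add_sum_erase, hloop, Finset.sum_eq_zero, add_zero]
  exact fun j hj => loops_apply_of_not_isDiag (s := s(a, j)) (Finset.ne_of_mem_erase hj).symm q

/-- Edges at `L` correct the parity of every other vertex independently; the handshake lemma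
takes care of `L` itself. -/
lemma exists_graph_of_subset_coreEdges {L : Fin n} {T : Finset (Sym2 (Fin n))}
    (hT : T ⊆ coreEdges L) {b : Fin n → ℕ} (hb : Even (∑ i, b i)) :
    ∃ G : Sym2 (Fin n) →₀ ℕ, (∀ a, G s(a, a) = 0) ∧ (∀ s, G s ≤ 1) ∧
      (∀ s ∈ coreEdges L, G s = 1 ↔ s ∈ T) ∧ ∀ a, Even (VN n G a + b a) := by
  let A : Sym2 (Fin n) →₀ ℕ := Finsupp.indicator T fun _ _ => 1
  let p : Fin n →₀ ℕ :=
    Finsupp.equivFunOnFinite.symm fun a => if a = L then 0 else (VN n A a + b a) % 2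
  have hA (s) : A s = if s ∈ T then 1 else 0 := by simp [A, Finsupp.indicator_apply]
  have hA_off {s} (hs : s ∉ coreEdges L) : A s = 0 := by rw [hA, if_neg (mt (@hT s) hs)]
  have hpL : p L = 0 := if_pos rfl
  have hp {a} (ha : a ≠ L) : p a = (VN n A a + b a) % 2 := if_neg ha
  have hp_le (a) : p a ≤ 1 := by
    rcases eq_or_ne a L with rfl | ha
    · exact hpL.trans_le zero_le_one
    · rw [hp ha]
      omega
  refine ⟨A + starAt L p, fun a => ?_, fun s => ?_, fun s hs => ?_, fun a => ?_⟩
  · rw [Finsupp.add_apply, hA_off (mk_self_notMem_coreEdges L a), zero_add]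
    rcases eq_or_ne a L with rfl | ha
    · rw [starAt_apply_mk, hpL]
    · exact starAt_apply_of_notMem (by simp [ha.symm]) p
  · by_cases hL : L ∈ s
    · obtain ⟨a, rfl⟩ := Sym2.mem_iff_exists.1 hL
      rw [Sym2.eq_swap, Finsupp.add_apply, hA_off (mk_notMem_coreEdges L a), starAt_apply_mk,
        zero_add]
      exact hp_le a
    · rw [Finsupp.add_apply, starAt_apply_of_notMem hL, add_zero, hA]
      split_ifs <;> simp
  · simp [starAt_apply_of_notMem (notMem_of_mem_coreEdges hs), hA]
  · have hne (a) (ha : a ≠ L) : Even (VN n (A + starAt L p) a + b a) := by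
      rw [VN_add, Pi.add_apply, VN_starAt_of_ne ha, hp ha, Nat.even_iff]
      omega
    by_cases ha : a = L
    · subst ha
      refine even_apply_of_forall_ne (f := fun a => VN n _ a + b a) ?_ hne
      rw [Finset.sum_add_distrib]
      exact (even_sum_VN _).add hb
    · exact hne a ha

lemma exists_graph_of_even_sum [Nontrivial (Fin n)] {b : Fin n → ℕ} (hb : Even (∑ i, b i))
    (i : Fin n) :
    ∃ G : Sym2 (Fin n) →₀ ℕ, (∀ a, G s(a, a) = 0) ∧ (∀ s, G s ≤ 1) ∧
      (∀ a, Even (VN n G a + b a)) ∧ n - 2 ≤ VN n G i := by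
  obtain ⟨L, hL⟩ := exists_ne i
  obtain ⟨G, hG_loop, hG_le, hG_core, hG_parity⟩ :=
    exists_graph_of_subset_coreEdges (Finset.Subset.refl (coreEdges L)) hb
  refine ⟨G, hG_loop, hG_le, hG_parity, ?_⟩
  have hone {j} (hj : j ∈ (Finset.univ.erase i).erase L) : G s(i, j) = 1 := by
    simp only [Finset.mem_erase, Finset.mem_univ, and_true] at hj
    have hmem : s(i, j) ∈ coreEdges L := mk_mem_coreEdges.2 ⟨hL.symm, hj.1, hj.2.symm⟩
    exact (hG_core _ hmem).2 hmem
  calc n - 2 = ∑ j ∈ (Finset.univ.erase i).erase L, G s(i, j) := by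
        rw [Finset.sum_congr rfl fun j hj => hone hj, Finset.sum_const, smul_eq_mul, mul_one,
          Finset.card_erase_of_mem (by simp [hL]), Finset.card_erase_of_mem (Finset.mem_univ i),
          Finset.card_fin, Nat.sub_sub]
    _ ≤ ∑ j ∈ Finset.univ.erase i, G s(i, j) :=
        Finset.sum_le_sum_of_subset (Finset.erase_subset _ _)
    _ ≤ VN n G i := by
        rw [VN_apply_eq_two_mul_add_sum_erase]
        exact Nat.le_add_left _ _

/-- The exponent vectors of the monomials of `pplusAt n k b`. -/
noncomputable def canonicalReps (b : Fin n → ℕ) : Finset (Sym2 (Fin n) →₀ ℕ) :=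
  (fiberFinset n b).filter fun u => ∀ s : Sym2 (Fin n), ¬s.IsDiag → u s ≤ 1

lemma mem_canonicalReps {b : Fin n → ℕ} {u : Sym2 (Fin n) →₀ ℕ} :
    u ∈ canonicalReps b ↔ VN n u = b ∧ ∀ s : Sym2 (Fin n), ¬s.IsDiag → u s ≤ 1 := by
  simp [canonicalReps, fiberFinset, fiber]

/-- A loopless graph has degrees at most `n - 1`, and parity excludes the value `b a + 1`, so the
missing degrees can be filled up with loops. -/
lemma exists_mem_canonicalReps {L : Fin n} {T : Finset (Sym2 (Fin n))} (hT : T ⊆ coreEdges L)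
    {b : Fin n → ℕ} (hb : Even (∑ i, b i)) (hge : ∀ i, n - 2 ≤ b i) :
    ∃ u ∈ canonicalReps b, ∀ s ∈ coreEdges L, u s = 1 ↔ s ∈ T := by
  obtain ⟨G, hG_loop, hG_le, hG_core, hG_parity⟩ := exists_graph_of_subset_coreEdges hT hb
  have hdeg (a) : VN n G a ≤ b a := by
    have hlt : VN n G a ≤ n - 1 := by
      rw [VN_apply_eq_two_mul_add_sum_erase, hG_loop, mul_zero, zero_add]
      simpa using Finset.sum_le_card_nsmul (Finset.univ.erase a) _ 1 fun j _ => hG_le s(a, j)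
    have := hge a
    have := Nat.even_iff.1 (hG_parity a)
    omega
  let q : Fin n →₀ ℕ := Finsupp.equivFunOnFinite.symm fun a => (b a - VN n G a) / 2
  refine ⟨G + loops q, mem_canonicalReps.2 ⟨?_, fun s hs => ?_⟩, fun s hs => ?_⟩
  · ext a
    have hq : q a = (b a - VN n G a) / 2 := rfl
    have := hdeg a
    have := Nat.even_iff.1 (hG_parity a)
    rw [VN_add, Pi.add_apply, VN_loops, hq]
    omega
  · rw [Finsupp.add_apply, loops_apply_of_not_isDiag hs, add_zero]
    exact hG_le s
  · rw [Finsupp.add_apply, loops_apply_of_not_isDiag (not_isDiag_of_mem_coreEdges hs), add_zero]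
    exact hG_core s hs

lemma eq_of_mem_canonicalReps {L : Fin n} {b : Fin n → ℕ} {u v : Sym2 (Fin n) →₀ ℕ}
    (hu : u ∈ canonicalReps b) (hv : v ∈ canonicalReps b) (h : ∀ s ∈ coreEdges L, u s = v s) :
    u = v := by
  obtain ⟨hu_deg, hu_le⟩ := mem_canonicalReps.1 hu
  obtain ⟨hv_deg, hv_le⟩ := mem_canonicalReps.1 hv
  have hoff {s : Sym2 (Fin n)} (hs : ¬ s.IsDiag) : u s = v s := by
    have heven : Even ((u + v) s) := by
      refine even_apply_of_even_on_coreEdges (L := L) (fun s hs => ?_) (fun a => ?_) hs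
      · rw [Finsupp.add_apply, h s hs]
        exact Even.add_self _
      · rw [VN_add, hu_deg, hv_deg]
        exact Even.add_self _
    rw [Finsupp.add_apply, Nat.even_iff] at heven
    have := hu_le s hs
    have := hv_le s hs
    omega
  ext s
  induction s with
  | _ i j =>
    rcases eq_or_ne i j with rfl | hij
    · have hdeg := congrFun (hu_deg.trans hv_deg.symm) i
      have hsum : ∑ j ∈ Finset.univ.erase i, u s(i, j) = ∑ j ∈ Finset.univ.erase i, v s(i, j) :=
        Finset.sum_congr rfl fun j hj =>
          hoff (s := s(i, j)) (Finset.ne_of_mem_erase hj).symm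
      rw [VN_apply_eq_two_mul_add_sum_erase, VN_apply_eq_two_mul_add_sum_erase, hsum] at hdeg
      omega
    · exact hoff hij

end CanonicalRepresentatives

section Signs

variable {n}

/-- The sign `∏ s, ε s ^ u s` by which the twisting `x_s ↦ ε s • x_s` scales the monomial `x ^ u`,
as a character of the group of sign vectors. -/
def monomialSign (u : Sym2 (Fin n) →₀ ℕ) : (Sym2 (Fin n) → ℤˣ) →* ℤˣ where
  toFun ε := ∏ s, ε s ^ u s
  map_one' := by simp
  map_mul' ε δ := by simp [mul_pow, Finset.prod_mul_distrib]

lemma monomialSign_apply (u : Sym2 (Fin n) →₀ ℕ) (ε : Sym2 (Fin n) → ℤˣ) :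
    monomialSign u ε = ∏ s, ε s ^ u s := rfl

lemma monomialSign_add (u v : Sym2 (Fin n) →₀ ℕ) :
    monomialSign (u + v) = monomialSign u * monomialSign v := by
  ext ε
  simp [monomialSign_apply, pow_add, Finset.prod_mul_distrib]

lemma monomialSign_mulSingle (u : Sym2 (Fin n) →₀ ℕ) (s : Sym2 (Fin n)) (x : ℤˣ) :
    monomialSign u (Pi.mulSingle s x) = x ^ u s := by
  rw [monomialSign_apply, Fintype.prod_eq_single s fun t ht => by
    rw [Pi.mulSingle_eq_of_ne ht, one_pow], Pi.mulSingle_eq_same]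

/-- The sign vector `s(a, b) ↦ δ * (η a * η b)`. Its twisting scales every `V_n`-homogeneous
polynomial by a sign and therefore fixes `I_n`. -/
def gradingSigns (δ : ℤˣ) (η : Fin n → ℤˣ) : Sym2 (Fin n) → ℤˣ :=
  Sym2.lift ⟨fun a b => δ * (η a * η b), fun _ _ => congrArg (δ * ·) (mul_comm _ _)⟩

lemma monomialSign_gradingSigns (δ : ℤˣ) (η : Fin n → ℤˣ) (u : Sym2 (Fin n) →₀ ℕ) :
    monomialSign u (gradingSigns δ η) = δ ^ ((∑ i, VN n u i) / 2) * ∏ i, η i ^ VN n u i := by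
  have hmul (s : Sym2 (Fin n)) : gradingSigns δ η s = δ * ∏ i, η i ^ wtN n s i := by
    induction s with
    | _ a b => rw [prod_pow_wtN, gradingSigns, Sym2.lift_mk]
  rw [monomialSign_apply, sum_VN, Nat.mul_div_cancel_left _ two_pos, ← prod_prod_pow_wtN_pow]
  simp only [hmul, mul_pow, Finset.prod_mul_distrib, Finset.prod_pow_eq_pow_sum]

/-- The sign vectors that are `1` on all loops and on all edges at `L`. -/
def normalizedSigns (L : Fin n) : Subgroup (Sym2 (Fin n) → ℤˣ) :=
  Subgroup.pi {s | s ∉ coreEdges L} fun _ => ⊥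

lemma mem_normalizedSigns {L : Fin n} {τ : Sym2 (Fin n) → ℤˣ} :
    τ ∈ normalizedSigns L ↔ ∀ s ∉ coreEdges L, τ s = 1 := by
  simp [normalizedSigns, Subgroup.mem_pi]

instance (L : Fin n) : DecidablePred (· ∈ normalizedSigns L) :=
  fun _ => decidable_of_iff _ mem_normalizedSigns.symm

lemma exists_apply_eq_neg_one {L : Fin n} {τ : Sym2 (Fin n) → ℤˣ} (hτ : τ ∈ normalizedSigns L)
    (hne : τ ≠ 1) : ∃ s ∈ coreEdges L, τ s = -1 := by
  obtain ⟨s, hs⟩ := Function.ne_iff.1 hne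
  exact ⟨s, not_not.1 fun h => hs (mem_normalizedSigns.1 hτ s h),
    (Int.units_eq_one_or _).resolve_left hs⟩

lemma card_normalizedSigns (L : Fin n) :
    Fintype.card (normalizedSigns L) = 2 ^ (n - 1).choose 2 := by
  let restrict : normalizedSigns L ≃ (coreEdges L → ℤˣ) :=
    { toFun τ s := τ.1 s
      invFun ρ := ⟨fun s => if hs : s ∈ coreEdges L then ρ ⟨s, hs⟩ else 1,
        mem_normalizedSigns.2 fun s hs => dif_neg hs⟩
      left_inv τ := by
        ext s
        by_cases hs : s ∈ coreEdges L
        · simp [hs]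
        · simp [hs, mem_normalizedSigns.1 τ.2 s hs]
      right_inv ρ := by
        ext s
        simp }
  rw [Fintype.card_congr restrict, Fintype.card_fun, Fintype.card_units_int, Fintype.card_coe,
    card_coreEdges]

lemma exists_gradingSigns_mul_mem_normalizedSigns (L : Fin n) {ε : Sym2 (Fin n) → ℤˣ}
    (hε : ∀ a b, ε s(a, a) = ε s(b, b)) :
    ∃ (δ : ℤˣ) (η : Fin n → ℤˣ), gradingSigns δ η * ε ∈ normalizedSigns L := by
  refine ⟨ε s(L, L), fun a => ε s(a, L), mem_normalizedSigns.2 fun s hs => ?_⟩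
  induction s with
  | _ a b =>
    simp only [Pi.mul_apply, gradingSigns, Sym2.lift_mk]
    have hout : a = b ∨ a = L ∨ b = L := by
      have := mt mk_mem_coreEdges.2 hs
      tauto
    rcases hout with rfl | rfl | rfl
    · rw [Int.units_mul_self, mul_one, hε a L, Int.units_mul_self]
    · rw [← mul_assoc, Int.units_mul_self, one_mul, Sym2.eq_swap, Int.units_mul_self]
    · rw [mul_comm (ε s(a, b)), ← mul_assoc, Int.units_mul_self, one_mul, Int.units_mul_self]

lemma sum_monomialSign_normalizedSigns_eq_zero {L : Fin n} {v : Sym2 (Fin n) →₀ ℕ}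
    {s : Sym2 (Fin n)} (hs : s ∈ coreEdges L) (hv : Odd (v s)) :
    ∑ τ : normalizedSigns L, (monomialSign v τ : ℤ) = 0 := by
  let χ : normalizedSigns L →* ℤ :=
    (Units.coeHom ℤ).comp ((monomialSign v).comp (normalizedSigns L).subtype)
  have hχ : χ ≠ 1 := by
    let τ : normalizedSigns L := ⟨Pi.mulSingle s (-1), mem_normalizedSigns.2 fun t ht =>
      Pi.mulSingle_eq_of_ne (ne_of_mem_of_not_mem hs ht).symm _⟩
    refine fun h => absurd (DFunLike.congr_fun h τ) ?_
    change ((monomialSign v (Pi.mulSingle s (-1)) : ℤˣ) : ℤ) ≠ 1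
    rw [monomialSign_mulSingle, hv.neg_one_pow]
    decide
  exact sum_hom_units_eq_zero χ hχ

lemma monomialSign_eq_prod_filter {L : Fin n} {τ : Sym2 (Fin n) → ℤˣ}
    (hτ : τ ∈ normalizedSigns L) {u : Sym2 (Fin n) →₀ ℕ} (hu : ∀ s ∈ coreEdges L, u s ≤ 1) :
    monomialSign u τ = ∏ s ∈ coreEdges L with u s = 1, τ s := by
  rw [monomialSign_apply, Finset.prod_filter, ← Finset.prod_subset (Finset.subset_univ _)]
  · refine Finset.prod_congr rfl fun s hs => ?_
    rcases Nat.le_one_iff_eq_zero_or_eq_one.1 (hu s hs) with h | h <;> simp [h]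
  · intro s _ hs
    rw [mem_normalizedSigns.1 hτ s hs, one_pow]

/-- Canonical representatives correspond to subsets of the core edges, so the sum is the expansion
of the product. -/
lemma sum_monomialSign_canonicalReps {L : Fin n} {τ : Sym2 (Fin n) → ℤˣ}
    (hτ : τ ∈ normalizedSigns L) {b : Fin n → ℕ} (hb : Even (∑ i, b i)) (hge : ∀ i, n - 2 ≤ b i) :
    ∑ u ∈ canonicalReps b, (monomialSign u τ : ℤ) = ∏ s ∈ coreEdges L, (1 + (τ s : ℤ)) := by
  have hle {u} (hu : u ∈ canonicalReps b) (s) (hs : s ∈ coreEdges L) : u s ≤ 1 :=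
    (mem_canonicalReps.1 hu).2 s (not_isDiag_of_mem_coreEdges hs)
  rw [Finset.prod_one_add]
  refine Finset.sum_bij (fun u _ => (coreEdges L).filter fun s => u s = 1)
    (fun u _ => Finset.mem_powerset.2 (Finset.filter_subset _ _)) (fun u hu v hv h => ?_)
    (fun T hT => ?_) fun u hu => ?_
  · refine eq_of_mem_canonicalReps (L := L) hu hv fun s hs => ?_
    have hone : u s = 1 ↔ v s = 1 := by simpa [hs] using Finset.ext_iff.1 h s
    have := hle hu s hs
    have := hle hv s hs
    omega
  · rw [Finset.mem_powerset] at hT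
    obtain ⟨u, hu, hu_core⟩ := exists_mem_canonicalReps hT hb hge
    refine ⟨u, hu, ?_⟩
    rw [Finset.filter_congr hu_core, Finset.filter_mem_eq_inter, Finset.inter_eq_right.2 hT]
  · rw [monomialSign_eq_prod_filter hτ (hle hu), Units.coe_prod]

/-- Otherwise `u` has an odd entry wherever the graph `G` has an edge, and its degrees are at least
those of `G`. -/
lemma exists_odd_add_apply (L : Fin n) {G u : Sym2 (Fin n) →₀ ℕ} (hG_loop : ∀ a, G s(a, a) = 0)
    (hG_le : ∀ s, G s ≤ 1) (hG_parity : ∀ a, Even (VN n G a + VN n u a)) {i : Fin n}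
    (hi : VN n u i < VN n G i) : ∃ s ∈ coreEdges L, Odd ((G + u) s) := by
  by_contra! hcore
  simp only [Nat.not_odd_iff_even] at hcore
  have heven {s : Sym2 (Fin n)} (hs : ¬ s.IsDiag) : Even ((G + u) s) :=
    even_apply_of_even_on_coreEdges hcore (fun a => by rw [VN_add]; exact hG_parity a) hs
  have hle (s : Sym2 (Fin n)) : G s ≤ u s := by
    by_cases hs : s.IsDiag
    · induction s with
      | _ a b =>
        obtain rfl : a = b := hs
        simp [hG_loop]
    · have := hG_le s
      have := Nat.even_iff.1 (heven hs)
      rw [Finsupp.add_apply] at this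
      omega
  exact hi.not_ge (Finset.sum_le_sum fun s _ => Nat.mul_le_mul_right _ (hle s))

end Signs

section Twistings

variable {n k}

lemma veroHom_monomial (u : Sym2 (Fin n) →₀ ℕ) (a : k) :
    veroHom n k (monomial u a) = monomial (veroDegree u) a := by
  have hX (s : Sym2 (Fin n)) :
      (Sym2.lift ⟨fun a b => X a * X b, fun _ _ => mul_comm _ _⟩ s : MvPolynomial (Fin n) k) =
        ∏ i, X i ^ wtN n s i := by
    induction s with
    | _ a b => rw [prod_pow_wtN, Sym2.lift_mk]
  rw [veroHom, aeval_monomial, monomial_eq, algebraMap_eq,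
    Finsupp.prod_fintype _ _ fun _ => pow_zero _, Finsupp.prod_fintype _ _ fun _ => pow_zero _]
  simp only [hX, prod_prod_pow_wtN_pow, coe_veroDegree]

lemma mem_range_veroHom_iff {F : MvPolynomial (Fin n) k} :
    F ∈ (veroHom n k).range ↔ ∀ b ∈ F.support, Even (∑ i, b i) := by
  constructor
  · rw [AlgHom.mem_range]
    rintro ⟨f, rfl⟩ b hb
    rw [f.as_sum, map_sum] at hb
    obtain ⟨u, -, hu⟩ := Finset.mem_biUnion.1 (support_sum hb)
    rw [veroHom_monomial] at hu
    rw [Finset.mem_singleton.1 (support_monomial_subset hu), coe_veroDegree]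
    exact even_sum_VN u
  · intro h
    rw [F.as_sum]
    refine sum_mem fun b hb => ?_
    obtain ⟨u, hu⟩ := exists_VN_eq (h b hb)
    exact (veroHom n k).mem_range.2
      ⟨monomial u (coeff b F), by rw [veroHom_monomial, veroDegree_eq_iff.2 hu]⟩

/-- The algebra endomorphism `x_s ↦ ε s • x_s`. The ℤ₂-twistings are exactly these maps. -/
noncomputable def twist (ε : Sym2 (Fin n) → ℤˣ) : R n k →ₐ[k] R n k :=
  aeval fun s => ε s • X s

lemma twist_monomial (ε : Sym2 (Fin n) → ℤˣ) (u : Sym2 (Fin n) →₀ ℕ) (a : k) :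
    twist ε (monomial u a) = monomial u (monomialSign u ε • a) := by
  rw [twist, aeval_monomial, Finsupp.prod_fintype _ _ fun _ => pow_zero _]
  simp only [smul_pow, Finset.prod_smul, ← monomialSign_apply]
  rw [mul_smul_comm, LinearMap.CompatibleSMul.map_smul (monomial u), monomial_eq, algebraMap_eq,
    Finsupp.prod_fintype _ _ fun _ => pow_zero _]

lemma twist_eq_sum (ε : Sym2 (Fin n) → ℤˣ) (f : R n k) :
    twist ε f = ∑ u ∈ f.support, monomial u (monomialSign u ε • coeff u f) := by
  conv_lhs => rw [f.as_sum]
  simp only [map_sum, twist_monomial]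

lemma twist_twist (ε δ : Sym2 (Fin n) → ℤˣ) (f : R n k) :
    twist ε (twist δ f) = twist (ε * δ) f := by
  suffices (twist ε).comp (twist δ) = (twist (ε * δ) : R n k →ₐ[k] R n k) from
    DFunLike.congr_fun this f
  refine algHom_ext fun s => ?_
  simp only [twist, aeval_X, AlgHom.comp_apply, Pi.mul_apply, map_zsmul_unit]
  rw [mul_comm, mul_smul]

lemma twist_one (f : R n k) : twist 1 f = f := by
  simp [twist]

lemma twist_twist_self (ε : Sym2 (Fin n) → ℤˣ) (f : R n k) : twist ε (twist ε f) = f := by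
  have hε : ε * ε = 1 := funext fun s => Int.units_mul_self (ε s)
  rw [twist_twist, hε, twist_one]

lemma exists_eq_twist_of_isTwisting {φ : R n k ≃ₐ[k] R n k} (hφ : IsTwisting n k φ) :
    ∃ ε, φ.toAlgHom = twist ε := by
  have hsign (s : Sym2 (Fin n)) : ∃ x : ℤˣ, φ (X s) = x • X s := by
    rcases hφ s with h | h
    · exact ⟨1, by rw [h, one_smul]⟩
    · exact ⟨-1, by rw [h, Units.neg_smul, one_smul]⟩
  choose ε hε using hsign
  exact ⟨ε, algHom_ext fun s => by simp [twist, hε]⟩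

lemma coeff_veroHom_twist (ε : Sym2 (Fin n) → ℤˣ) (f : R n k) (b : Fin n →₀ ℕ) :
    coeff b (veroHom n k (twist ε f)) =
      ∑ u ∈ f.support with veroDegree u = b, monomialSign u ε • coeff u f := by
  simp only [twist_eq_sum, map_sum, veroHom_monomial, coeff_sum, coeff_monomial,
    Finset.sum_filter]

variable (k) in
/-- The twisted Veronese ideal, the image of `I_n` under `x_s ↦ ε s • x_s`. -/
noncomputable def twistedVeronese (ε : Sym2 (Fin n) → ℤˣ) : Ideal (R n k) :=
  Ideal.map (twist ε) (Iideal n k)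

lemma mem_twistedVeronese {ε : Sym2 (Fin n) → ℤˣ} {f : R n k} :
    f ∈ twistedVeronese k ε ↔ veroHom n k (twist ε f) = 0 := by
  rw [twistedVeronese, Ideal.mem_map_iff_of_surjective _ fun f => ⟨twist ε f, twist_twist_self ε f⟩]
  constructor
  · rintro ⟨g, hg, rfl⟩
    rwa [twist_twist_self]
  · exact fun h => ⟨twist ε f, h, twist_twist_self ε f⟩

lemma twistedVeronese_gradingSigns_mul (δ : ℤˣ) (η : Fin n → ℤˣ) (ε : Sym2 (Fin n) → ℤˣ) :
    twistedVeronese k (gradingSigns δ η * ε) = twistedVeronese k ε := by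
  have hcoeff (f : R n k) (b : Fin n →₀ ℕ) :
      coeff b (veroHom n k (twist (gradingSigns δ η * ε) f)) =
        (δ ^ ((∑ i, b i) / 2) * ∏ i, η i ^ b i) • coeff b (veroHom n k (twist ε f)) := by
    rw [coeff_veroHom_twist, coeff_veroHom_twist, Finset.smul_sum]
    refine Finset.sum_congr rfl fun u hu => ?_
    rw [map_mul, mul_smul, monomialSign_gradingSigns,
      veroDegree_eq_iff.1 (Finset.mem_filter.1 hu).2]
  ext f
  simp only [mem_twistedVeronese, MvPolynomial.ext_iff, hcoeff, coeff_zero, smul_eq_zero_iff_eq]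

lemma span_twist_gradingSigns_mul {f : R n k} {b : Fin n → ℕ} (hf : VHomog n k f b) (δ : ℤˣ)
    (η : Fin n → ℤˣ) (ε : Sym2 (Fin n) → ℤˣ) :
    Ideal.span {twist (gradingSigns δ η * ε) f} = Ideal.span {twist ε f} := by
  have hsmul : twist (gradingSigns δ η * ε) f =
      (δ ^ ((∑ i, b i) / 2) * ∏ i, η i ^ b i) • twist ε f := by
    rw [twist_eq_sum, twist_eq_sum, Finset.smul_sum]
    refine Finset.sum_congr rfl fun u hu => ?_
    rw [map_mul, mul_smul, monomialSign_gradingSigns, hf u hu,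
      LinearMap.CompatibleSMul.map_smul (monomial u)]
  rcases Int.units_eq_one_or (δ ^ ((∑ i, b i) / 2) * ∏ i, η i ^ b i) with h | h
  · rw [hsmul, h, one_smul]
  · rw [hsmul, h, Units.neg_smul, one_smul, Ideal.span_singleton_neg]

lemma eq_on_diag_of_Jideal_le_twistedVeronese (hk : (2 : k) ≠ 0) {ε : Sym2 (Fin n) → ℤˣ}
    (hJ : Jideal n k ≤ twistedVeronese k ε) (a b : Fin n) : ε s(a, a) = ε s(b, b) := by
  wlog hab : a < b generalizing a b
  · rcases (not_lt.1 hab).eq_or_lt with rfl | h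
    exacts [rfl, (this b a h).symm]
  have hminor := mem_twistedVeronese.1 (hJ (Ideal.subset_span ⟨a, b, hab, rfl⟩))
  have hsmul : (ε s(a, a) * ε s(b, b)) • (X a ^ 2 * X b ^ 2 : MvPolynomial (Fin n) k) =
      X a ^ 2 * X b ^ 2 := by
    simpa [twist, veroHom, smul_mul_smul_comm, smul_pow, mul_pow, ← pow_two, sub_eq_zero]
      using hminor
  by_contra hne
  have hneg : ε s(a, a) * ε s(b, b) = -1 := by
    rw [Int.units_ne_iff_eq_neg.1 hne, neg_mul, Int.units_mul_self]
  have hX : (X a ^ 2 * X b ^ 2 : MvPolynomial (Fin n) k) ≠ 0 := by simp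
  rw [hneg, Units.neg_smul, one_smul, neg_eq_iff_add_eq_zero, ← two_mul] at hsmul
  refine (mul_ne_zero ?_ hX) hsmul
  rw [← map_ofNat (C : k →+* _) 2, Ne, C_eq_zero]
  exact hk

lemma exists_normalizedSigns_twistedVeronese_eq (hk : (2 : k) ≠ 0) (L : Fin n)
    {φ : R n k ≃ₐ[k] R n k} (hφ : IsTwisting n k φ)
    (hJ : Jideal n k ≤ Ideal.map φ.toAlgHom (Iideal n k)) :
    ∃ σ : normalizedSigns L, Ideal.map φ.toAlgHom (Iideal n k) = twistedVeronese k σ ∧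
      ∀ b f, VHomog n k f b → Ideal.span {φ f} = Ideal.span {twist σ.1 f} := by
  obtain ⟨ε, hε⟩ := exists_eq_twist_of_isTwisting hφ
  rw [hε] at hJ ⊢
  obtain ⟨δ, η, hσ⟩ := exists_gradingSigns_mul_mem_normalizedSigns L
    (eq_on_diag_of_Jideal_le_twistedVeronese hk hJ)
  refine ⟨⟨_, hσ⟩, (twistedVeronese_gradingSigns_mul δ η ε).symm, fun b f hf => ?_⟩
  rw [span_twist_gradingSigns_mul hf, ← hε]
  rfl

end Twistings

section CanonicalPolynomial

variable {n k}

lemma pplusAt_eq_sum (b : Fin n → ℕ) : pplusAt n k b = ∑ u ∈ canonicalReps b, monomial u 1 := rfl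

lemma coeff_pplusAt (b : Fin n → ℕ) (u : Sym2 (Fin n) →₀ ℕ) :
    coeff u (pplusAt n k b) = if u ∈ canonicalReps b then 1 else 0 := by
  simp [pplusAt_eq_sum, coeff_sum, coeff_monomial]

lemma vHomog_pplusAt (b : Fin n → ℕ) : VHomog n k (pplusAt n k b) b := by
  intro u hu
  rw [mem_support_iff, coeff_pplusAt] at hu
  exact (mem_canonicalReps.1 (ite_ne_right_iff.1 hu).1).1

lemma pplusAt_ne_zero (L : Fin n) {b : Fin n → ℕ} (hb : Even (∑ i, b i))
    (hge : ∀ i, n - 2 ≤ b i) : pplusAt n k b ≠ 0 := by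
  obtain ⟨u, hu, -⟩ := exists_mem_canonicalReps (Finset.empty_subset (coreEdges L)) hb hge
  refine ne_of_apply_ne (coeff u) ?_
  rw [coeff_pplusAt, if_pos hu]
  exact one_ne_zero

lemma totalDegree_of_vHomog {f : R n k} {b : Fin n → ℕ} (hf : VHomog n k f b) (hne : f ≠ 0) :
    f.totalDegree = (∑ i, b i) / 2 := by
  refine IsHomogeneous.totalDegree (fun u hu => ?_) hne
  rw [← hf u (mem_support_iff.2 hu), sum_VN, Nat.mul_div_cancel_left _ two_pos,
    Finsupp.weight_apply, Finsupp.sum_fintype _ _ (by simp)]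
  simp

variable {L : Fin n} {τ : Sym2 (Fin n) → ℤˣ} {b : Fin n →₀ ℕ}

lemma veroHom_twist_pplusAt (hτ : τ ∈ normalizedSigns L) (hb : Even (∑ i, b i))
    (hge : ∀ i, n - 2 ≤ b i) :
    veroHom n k (twist τ (pplusAt n k b)) =
      monomial b ((∏ s ∈ coreEdges L, (1 + (τ s : ℤ)) : ℤ) : k) := by
  have hterm {u} (hu : u ∈ canonicalReps (b : Fin n → ℕ)) :
      veroHom n k (twist τ (monomial u 1)) = monomial b ((monomialSign u τ : ℤ) : k) := by
    rw [twist_monomial, veroHom_monomial, veroDegree_eq_iff.2 (mem_canonicalReps.1 hu).1,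
      Units.smul_def, zsmul_one]
  rw [pplusAt_eq_sum, map_sum, map_sum, Finset.sum_congr rfl fun u hu => hterm hu, ← map_sum,
    ← sum_monomialSign_canonicalReps hτ hb hge, Int.cast_sum]

lemma twist_pplusAt_mem_twistedVeronese {σ σ₀ : normalizedSigns L} (hne : σ ≠ σ₀)
    (hb : Even (∑ i, b i)) (hge : ∀ i, n - 2 ≤ b i) :
    twist σ₀ (pplusAt n k b) ∈ twistedVeronese k σ.1 := by
  have hσσ₀ : (σ * σ₀ : Sym2 (Fin n) → ℤˣ) ≠ 1 := fun h =>
    hne <| Subtype.ext <| (mul_eq_one_iff_eq_inv.1 h).trans <|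
      funext fun s => Int.units_inv_eq_self (σ₀.1 s)
  obtain ⟨s, hs, hsign⟩ := exists_apply_eq_neg_one (mul_mem σ.2 σ₀.2) hσσ₀
  rw [mem_twistedVeronese, twist_twist, veroHom_twist_pplusAt (mul_mem σ.2 σ₀.2) hb hge,
    Finset.prod_eq_zero hs (by rw [hsign]; rfl), Int.cast_zero, monomial_zero]

lemma veroHom_pplusAt (L : Fin n) (hb : Even (∑ i, b i)) (hge : ∀ i, n - 2 ≤ b i) :
    veroHom n k (pplusAt n k b) = monomial b (2 ^ (coreEdges L).card) := by
  rw [← twist_one (pplusAt n k b), veroHom_twist_pplusAt (one_mem (normalizedSigns L)) hb hge]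
  simp [one_add_one_eq_two]

lemma exists_veroHom_mul_pplusAt (hk : (2 : k) ≠ 0) (L : Fin n) (hb : Even (∑ i, b i))
    (hge : ∀ i, n - 2 ≤ b i) {F : MvPolynomial (Fin n) k} (hF : F ∈ (veroHom n k).range)
    (hF_supp : ∀ d ∈ F.support, b ≤ d) : ∃ h, veroHom n k (h * pplusAt n k b) = F := by
  have hdvd : monomial b 1 * F.divMonomial b = F := by
    have hmod : F.modMonomial b = 0 := by
      ext d
      by_cases hd : b ≤ d
      · rw [coeff_modMonomial_of_le _ hd, coeff_zero]
      · rw [coeff_modMonomial_of_not_le _ hd, coeff_zero]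
        exact notMem_support_iff.1 (mt (hF_supp d) hd)
    simpa [hmod] using F.divMonomial_add_modMonomial b
  have hquot : F.divMonomial b ∈ (veroHom n k).range := by
    rw [mem_range_veroHom_iff] at hF ⊢
    intro d hd
    have hbd := hF (b + d) (by simpa [coeff_divMonomial] using hd)
    simp only [Finsupp.add_apply, Finset.sum_add_distrib] at hbd
    exact (Nat.even_add.1 hbd).1 hb
  obtain ⟨h, hh⟩ := (veroHom n k).mem_range.1 hquot
  refine ⟨C (2 ^ (coreEdges L).card)⁻¹ * h, ?_⟩
  have hpow : ((2 : k) ^ (coreEdges L).card)⁻¹ * 2 ^ (coreEdges L).card = 1 :=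
    inv_mul_cancel₀ (pow_ne_zero _ hk)
  rw [map_mul, map_mul, hh, veroHom_pplusAt L hb hge, ← algebraMap_eq, AlgHom.commutes,
    algebraMap_eq, mul_right_comm, C_mul_monomial, hpow, hdvd]

end CanonicalPolynomial

section Subintersections

variable {n k} {L : Fin n}

/-- Orthogonality of characters: the hypothesis on `G` kills every monomial of `f` of degree `b`. -/
lemma sum_monomialSign_smul_coeff_veroHom_twist_eq_zero {G : Sym2 (Fin n) →₀ ℕ} {b : Fin n →₀ ℕ}
    (hG : ∀ u, VN n u = b → ∃ s ∈ coreEdges L, Odd ((G + u) s)) (f : R n k) :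
    ∑ σ : normalizedSigns L,
      monomialSign G σ • coeff b (veroHom n k (twist σ.1 f)) = 0 := by
  simp only [coeff_veroHom_twist, Finset.smul_sum, smul_smul, ← MonoidHom.mul_apply,
    ← monomialSign_add]
  rw [Finset.sum_comm]
  refine Finset.sum_eq_zero fun u hu => ?_
  obtain ⟨s, hs, hodd⟩ := hG u (veroDegree_eq_iff.1 (Finset.mem_filter.1 hu).2)
  simp only [Units.smul_def]
  rw [← Finset.sum_smul, sum_monomialSign_normalizedSigns_eq_zero hs hodd, zero_smul]

lemma coeff_veroHom_twist_eq_zero_of_lt [Nontrivial (Fin n)] {σ₀ : normalizedSigns L} {f : R n k}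
    (hf : ∀ σ ≠ σ₀, f ∈ twistedVeronese k σ.1) {b : Fin n →₀ ℕ} {i : Fin n}
    (hi : b i < n - 2) : coeff b (veroHom n k (twist σ₀.1 f)) = 0 := by
  by_contra hne
  have hb : Even (∑ i, b i) :=
    mem_range_veroHom_iff.1 ⟨_, rfl⟩ b (mem_support_iff.2 hne)
  obtain ⟨G, hG_loop, hG_le, hG_parity, hG_deg⟩ := exists_graph_of_even_sum hb i
  have hodd (u) (hu : VN n u = b) : ∃ s ∈ coreEdges L, Odd ((G + u) s) :=
    exists_odd_add_apply L hG_loop hG_le (hu ▸ hG_parity) (hu ▸ hi.trans_le hG_deg)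
  have hsum := sum_monomialSign_smul_coeff_veroHom_twist_eq_zero hodd f
  rw [Fintype.sum_eq_single σ₀ fun σ hσ => by
    rw [mem_twistedVeronese.1 (hf σ hσ), coeff_zero, smul_zero], smul_eq_zero_iff_eq] at hsum
  exact hne hsum

theorem iInf_ne_twistedVeronese_eq_sup [Nontrivial (Fin n)] (hk : (2 : k) ≠ 0) (hn : Even n)
    (σ₀ : normalizedSigns L) :
    ⨅ (σ : normalizedSigns L) (_ : σ ≠ σ₀), twistedVeronese k σ.1 =
      (⨅ σ : normalizedSigns L, twistedVeronese k σ.1) ⊔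
        Ideal.span {twist σ₀.1 (pplusEven n k)} := by
  let d : Fin n →₀ ℕ := Finsupp.equivFunOnFinite.symm fun _ => n - 2
  have hd : Even (∑ i, d i) := by simp [d, hn]
  have hge (i) : n - 2 ≤ d i := le_rfl
  have hmem {σ} (hσ : σ ≠ σ₀) : twist σ₀ (pplusEven n k) ∈ twistedVeronese k σ.1 :=
    twist_pplusAt_mem_twistedVeronese (b := d) hσ hd hge
  refine le_antisymm (fun f hf => ?_) (sup_le (le_iInf₂ fun σ _ => iInf_le _ σ)
    (le_iInf₂ fun σ hσ => (Ideal.span_singleton_le_iff_mem _).2 (hmem hσ)))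
  simp only [Submodule.mem_iInf] at hf
  obtain ⟨h, hh⟩ : ∃ h, veroHom n k (h * pplusEven n k) = veroHom n k (twist σ₀ f) :=
    exists_veroHom_mul_pplusAt (b := d) hk L hd hge ((veroHom n k).mem_range_self _) fun b hb i =>
      not_lt.1 fun hlt => mem_support_iff.1 hb (coeff_veroHom_twist_eq_zero_of_lt hf hlt)
  have hsub : f - twist σ₀ (h * pplusEven n k) ∈
      ⨅ σ : normalizedSigns L, twistedVeronese k σ.1 := by
    rw [Submodule.mem_iInf]
    intro σ
    by_cases hσ : σ = σ₀
    · rw [mem_twistedVeronese, hσ, map_sub, map_sub, twist_twist_self, hh, sub_self]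
    · rw [map_mul]
      exact sub_mem (hf σ hσ) (Ideal.mul_mem_left _ _ (hmem hσ))
  rw [← sub_add_cancel f (twist σ₀ (h * pplusEven n k))]
  refine Submodule.add_mem_sup hsub ?_
  rw [map_mul]
  exact Ideal.mul_mem_left _ _ (Ideal.mem_span_singleton_self _)

end Subintersections

/-- For even `n ≥ 4` and `char k ≠ 2`: omitting one component of the
prime decomposition of `J_n` yields `J_n + ⟨φ_l(p⁺_n)⟩` with a single additional
generator; `p⁺_n` is `V_n`-homogeneous of `V_n`-degree `(n-2,…,n-2)` and total degree
`n(n-2)/2`. -/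
theorem subintersection_even (n : ℕ) (hn : 4 ≤ n) (heven : Even n)
    (k : Type*) [Field k] (hk : (2 : k) ≠ 0)
    (φ : Fin (2 ^ c (n - 1)) → (R n k ≃ₐ[k] R n k))
    (htw : ∀ i, IsTwisting n k (φ i))
    (hdist : Function.Injective fun i => Ideal.map (φ i).toAlgHom (Iideal n k))
    (hdec : Jideal n k = ⨅ i, Ideal.map (φ i).toAlgHom (Iideal n k)) :
    (∀ l, (⨅ (i) (_ : i ≠ l), Ideal.map (φ i).toAlgHom (Iideal n k)) =
        Jideal n k + Ideal.span {(φ l) (pplusEven n k)}) ∧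
    VHomog n k (pplusEven n k) (fun _ => n - 2) ∧
    (pplusEven n k).totalDegree = n * (n - 2) / 2 := by
  have : Nontrivial (Fin n) := Fin.nontrivial_iff_two_le.2 (by omega)
  let L : Fin n := ⟨0, by omega⟩
  have hhomog : VHomog n k (pplusEven n k) fun _ => n - 2 := vHomog_pplusAt _
  choose σ hσ hspan using fun i => exists_normalizedSigns_twistedVeronese_eq hk L (htw i)
    (hdec.trans_le (iInf_le _ i))
  have hbij : Function.Bijective σ := (Fintype.bijective_iff_injective_and_card σ).2
    ⟨fun i j h => hdist (by dsimp only; rw [hσ, hσ, h]),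
      by rw [Fintype.card_fin, card_normalizedSigns, c]⟩
  refine ⟨fun l => ?_, hhomog, ?_⟩
  · rw [hdec, hspan l _ _ hhomog]
    simp only [hσ, Submodule.add_eq_sup]
    rw [hbij.2.iInf_comp fun τ : normalizedSigns L => twistedVeronese k τ.1,
      ← iInf_ne_twistedVeronese_eq_sup hk heven, ← hbij.2.iInf_comp]
    simp only [hbij.1.ne_iff]
  · rw [totalDegree_of_vHomog hhomog (pplusAt_ne_zero L (by simp [heven]) fun _ => le_rfl)]
    simp

end Veronese
end

section
/- Fix b ∈ ℕ^n with Σ_i b_i even (so that the fiber V_n^{-1}[b] is nonempty) and with b_i ≥ n−2 for every i ∈ [n]. Then the number of equivalence classes of V_n^{-1}[b] modulo L'_n equals exactly 2^{c_{n−1}}; in particular, all such fibers have the same number of equivalence classes. -/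
open scoped BigOperators

namespace Veronese

open MvPolynomial

variable (n : ℕ)

variable (k : Type*) [Field k]

/-!
Two vectors `u`, `v` of the same fiber are equivalent iff their off-diagonal entries agree modulo
two, that is, iff the graph on `[n]` joining `i ≠ j` when `u_ij` is odd is the same for both. A
graph `G` arises in this way from the fiber over `b` iff every vertex `i` has degree at most `b_i`
and congruent to `b_i` modulo two: take the adjacency matrix of `G` and add
`(b_i - deg i) / 2` on the diagonal. If `b_i ≥ n - 2`, the bound on the degree follows from the
congruence, since `deg i ≤ n - 1`. Finally, by the handshake lemma, a graph with prescribed degree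
parities of even sum is determined, with no constraint, by what remains after deleting one vertex,
and there are `2 ^ C(n-1, 2)` graphs on the other `n - 1` vertices.
-/

section DegreeParity

open SimpleGraph

variable {V : Type*}

theorem card_simpleGraph [Finite V] :
    Nat.card (SimpleGraph V) = 2 ^ (Nat.card V).choose 2 := by
  have range_edgeSet : Set.range (edgeSet (V := V)) = 𝒫 Sym2.diagSetᶜ := by
    ext S
    refine ⟨?_, fun hS => ⟨fromEdgeSet S, ?_⟩⟩
    · rintro ⟨G, rfl⟩
      exact G.edgeSet_subset_compl_diagSet
    · rw [edgeSet_fromEdgeSet, sdiff_eq_left, ← Set.subset_compl_iff_disjoint_right]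
      exact hS
  rw [← Set.ncard_univ, ← Set.ncard_image_of_injective _ edgeSet_injective, Set.image_univ,
    range_edgeSet, Set.ncard_powerset _ (Set.toFinite _), Sym2.ncard_diagSet_compl]

theorem exists_induce_compl_eq_and_adj_iff {v : V} (H : SimpleGraph ({v}ᶜ : Set V))
    (S : Set ({v}ᶜ : Set V)) :
    ∃ G : SimpleGraph V, G.induce {v}ᶜ = H ∧ ∀ w : ({v}ᶜ : Set V), G.Adj v w ↔ w ∈ S := by
  let star : Set (Sym2 V) := (fun w : ({v}ᶜ : Set V) => s(v, ↑w)) '' S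
  refine ⟨H.spanningCoe ⊔ fromEdgeSet star, ?_, fun w => ?_⟩
  · ext a b
    have ha : (a : V) ≠ v := a.2
    have hb : (b : V) ≠ v := b.2
    have hstar : s(a.1, b.1) ∉ star := by
      rintro ⟨w, -, hw⟩
      have hv : v ∈ s(a.1, b.1) := hw ▸ Sym2.mem_mk_left v _
      exact (Sym2.mem_iff.1 hv).elim ha.symm hb.symm
    simp [hstar, ha, hb]
  · have hw : v ≠ w := fun h => w.2 h.symm
    simp [star, hw, hw.symm]

variable [Fintype V]

theorem cast_degree_eq_sum_compl {R : Type*} [AddCommMonoidWithOne R] [DecidableEq V]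
    (G : SimpleGraph V) [DecidableRel G.Adj] (v : V) :
    (G.degree v : R) = ∑ w ∈ {v}ᶜ, if G.Adj v w then 1 else 0 := by
  rw [G.degree_eq_sum_if_adj, Fintype.sum_eq_add_sum_compl v, if_neg G.irrefl, zero_add]

open scoped Classical in
/-- The degree sequence modulo two of a finite graph. -/
noncomputable def degreeParity (G : SimpleGraph V) (w : V) : ZMod 2 := G.degree w

theorem sum_degreeParity (G : SimpleGraph V) : ∑ w, degreeParity G w = 0 := by
  classical
  simp only [degreeParity]
  rw [← Nat.cast_sum, G.sum_degrees_eq_twice_card_edges, ZMod.natCast_eq_zero_iff_even]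
  exact even_two_mul _

open scoped Classical in
theorem degreeParity_eq_induce_compl_add (G : SimpleGraph V) {v : V}
    (w : ({v}ᶜ : Set V)) :
    degreeParity G w = degreeParity (G.induce {v}ᶜ) w + if G.Adj v w then 1 else 0 := by
  simp only [degreeParity, degree_eq_sum_if_adj]
  rw [Fintype.sum_eq_add_sum_compl v, add_comm, G.adj_comm,
    Finset.sum_subtype ({v}ᶜ : Finset V) (p := (· ∈ ({v}ᶜ : Set V))) (by simp)]
  rfl

theorem eq_of_induce_compl_eq_of_degreeParity_eq {G G' : SimpleGraph V} (v : V)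
    (hind : G.induce {v}ᶜ = G'.induce {v}ᶜ) (hdeg : degreeParity G = degreeParity G') :
    G = G' := by
  classical
  have adj_apex (w : V) : G.Adj v w ↔ G'.Adj v w := by
    obtain rfl | hw := eq_or_ne w v
    · simp
    · have h := congrFun hdeg w
      rw [degreeParity_eq_induce_compl_add G ⟨w, hw⟩,
        degreeParity_eq_induce_compl_add G' ⟨w, hw⟩, hind, add_right_inj] at h
      by_cases G.Adj v w <;> by_cases G'.Adj v w <;> simp_all
  ext a b
  obtain rfl | ha := eq_or_ne a v
  · exact adj_apex b
  obtain rfl | hb := eq_or_ne b v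
  · rw [G.adj_comm, G'.adj_comm, adj_apex]
  · exact iff_of_eq (congrArg (fun H => H.Adj ⟨a, ha⟩ ⟨b, hb⟩) hind)

theorem exists_induce_compl_eq_and_degreeParity_eq {v : V} {t : V → ZMod 2} (ht : ∑ w, t w = 0)
    (H : SimpleGraph ({v}ᶜ : Set V)) :
    ∃ G : SimpleGraph V, G.induce {v}ᶜ = H ∧ degreeParity G = t := by
  classical
  -- The prescribed parities at the vertices other than `v` dictate the neighbours of `v`.
  obtain ⟨G, induce_G, adj_apex⟩ :=
    exists_induce_compl_eq_and_adj_iff H {w | degreeParity H w ≠ t w}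
  have parity_of_ne (w : V) (hw : w ≠ v) : degreeParity G w = t w := by
    rw [degreeParity_eq_induce_compl_add G ⟨w, hw⟩, induce_G]
    simp only [adj_apex ⟨w, hw⟩, Set.mem_ofPred_eq]
    generalize degreeParity H _ = x
    generalize t w = y
    clear * -
    decide +revert
  refine ⟨G, induce_G, funext fun w => ?_⟩
  obtain rfl | hw := eq_or_ne w v
  · -- The parity at `v` is then forced, since both sides sum to zero.
    have hsum := (sum_degreeParity G).trans ht.symm
    rwa [Fintype.sum_eq_add_sum_compl w, Fintype.sum_eq_add_sum_compl w t,
      Finset.sum_congr rfl fun x hx => parity_of_ne x (by simpa using hx), add_left_inj] at hsum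
  · exact parity_of_ne w hw

theorem card_degreeParity_eq [Nonempty V] {t : V → ZMod 2} (ht : ∑ w, t w = 0) :
    Nat.card {G : SimpleGraph V | degreeParity G = t} = 2 ^ (Nat.card V - 1).choose 2 := by
  obtain ⟨v⟩ := ‹Nonempty V›
  have bijective_induce : Function.Bijective
      fun G : {G : SimpleGraph V | degreeParity G = t} => G.1.induce {v}ᶜ := by
    refine ⟨fun G G' h => ?_, fun H => ?_⟩
    · exact Subtype.ext (eq_of_induce_compl_eq_of_degreeParity_eq v h (G.2.trans G'.2.symm))
    · obtain ⟨G, hind, hdeg⟩ := exists_induce_compl_eq_and_degreeParity_eq ht H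
      exact ⟨⟨G, hdeg⟩, hind⟩
  rw [Nat.card_eq_of_bijective _ bijective_induce, card_simpleGraph, Nat.card_coe_set_eq,
    Set.ncard_compl, Set.ncard_singleton]

open scoped Classical in
theorem forall_degree_le_and_degreeParity_eq_iff {G : SimpleGraph V} {b : V → ℕ}
    (hb : ∀ w, Fintype.card V - 2 ≤ b w) :
    (∀ w, G.degree w ≤ b w ∧ degreeParity G w = b w) ↔ degreeParity G = fun w => ↑(b w) := by
  refine (forall_congr' fun w => and_iff_right_of_imp fun hparity => ?_).trans
    funext_iff.symm
  have hmod : G.degree w % 2 = b w % 2 := (ZMod.natCast_eq_natCast_iff' _ _ _).1 hparity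
  have hlt := G.degree_lt_card_verts w
  have := hb w
  lia

end DegreeParity

section Degree

variable {n}

theorem wt_eq_wtN (s : Sym2 (Fin n)) (i : Fin n) : wt n s i = wtN n s i := by
  induction s with | _ a b => simp [wt, wtN]

theorem sum_mul_wtN {M : Type*} [Semiring M] (f : Sym2 (Fin n) → M) (i : Fin n) :
    ∑ s, f s * (wtN n s i : M) = f s(i, i) * 2 + ∑ j ∈ {i}ᶜ, f s(i, j) := by
  have wtN_of_notMem (s : Sym2 (Fin n)) (hs : s ∉ Set.range (s(i, ·))) :
      wtN n s i = 0 := by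
    induction s with | _ a b =>
    have ha : i ≠ a := by rintro rfl; exact hs ⟨b, rfl⟩
    have hb : i ≠ b := by rintro rfl; exact hs ⟨a, Sym2.eq_swap⟩
    simp [wtN, ha, hb]
  have wtN_of_ne {j : Fin n} (hj : j ≠ i) : wtN n s(i, j) i = 1 := by simp [wtN, hj.symm]
  have wtN_diag : wtN n s(i, i) i = 2 := by simp [wtN]
  rw [← Fintype.sum_of_injective (s(i, ·)) (fun _ _ => Sym2.congr_right.1)
      (fun j => f s(i, j) * (wtN n s(i, j) i : M)) _
      (fun s hs => by rw [wtN_of_notMem s hs, Nat.cast_zero, mul_zero]) (fun _ => rfl),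
    Fintype.sum_eq_add_sum_compl i, wtN_diag, Nat.cast_ofNat]
  congr 1
  refine Finset.sum_congr rfl fun j hj => ?_
  rw [wtN_of_ne (by simpa using hj), Nat.cast_one, mul_one]

theorem VN_apply (u : Sym2 (Fin n) →₀ ℕ) (i : Fin n) :
    VN n u i = u s(i, i) * 2 + ∑ j ∈ {i}ᶜ, u s(i, j) := by
  simpa [VN] using sum_mul_wtN u i

theorem Vmap_apply (d : Sym2 (Fin n) → ℤ) (i : Fin n) :
    Vmap n d i = d s(i, i) * 2 + ∑ j ∈ {i}ᶜ, d s(i, j) := by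
  simpa [Vmap, wt_eq_wtN] using sum_mul_wtN d i

theorem Vmap_toZ (u : Sym2 (Fin n) →₀ ℕ) (i : Fin n) : Vmap n (toZ n u) i = VN n u i := by
  simp [Vmap, VN, toZ, wt_eq_wtN]

theorem toZ_sub_toZ_mem_Llat_iff {u v : Sym2 (Fin n) →₀ ℕ} :
    toZ n u - toZ n v ∈ Llat n ↔ VN n u = VN n v := by
  simp [Llat, sub_eq_zero, funext_iff, Vmap_toZ]

end Degree

section MinorLattice

variable {n}

theorem eq_zero_of_mem_Llat {d : Sym2 (Fin n) → ℤ} (hd : d ∈ Llat n)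
    (hoff : ∀ s : Sym2 (Fin n), ¬ s.IsDiag → d s = 0) : d = 0 := by
  funext s
  by_cases hs : s.IsDiag
  · induction s with | _ i j =>
    obtain rfl : i = j := Sym2.mk_isDiag_iff.1 hs
    have hi := congrFun (LinearMap.mem_ker.1 hd) i
    rw [Vmap_apply, Finset.sum_eq_zero fun j hj => hoff _ ?_] at hi
    · simpa using hi
    · simpa [eq_comm] using hj
  · exact hoff s hs

theorem minorVec_comm (i j : Fin n) : minorVec n i j = minorVec n j i := by
  simp only [minorVec, e_comm n i j, add_comm]

theorem minorVec_self (i : Fin n) : minorVec n i i = 0 := by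
  simp only [minorVec, two_smul, sub_self]

theorem minorVec_mem_L'lat (i j : Fin n) : minorVec n i j ∈ L'lat n := by
  rcases lt_trichotomy i j with hij | rfl | hij
  · exact Submodule.subset_span ⟨i, j, hij, rfl⟩
  · exact minorVec_self i ▸ zero_mem _
  · exact minorVec_comm i j ▸ Submodule.subset_span ⟨j, i, hij, rfl⟩

theorem minorVec_apply_of_not_isDiag (i j : Fin n) {s : Sym2 (Fin n)} (hs : ¬ s.IsDiag) :
    minorVec n i j s = -2 * e n i j s := by
  have e_diag (a : Fin n) : e n a a s = 0 :=
    Pi.single_eq_of_ne (by rintro rfl; exact hs rfl) _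
  simp [minorVec, e_diag]

theorem L'lat_le_Llat : L'lat n ≤ Llat n := by
  have Vmap_e (i j : Fin n) : Vmap n (e n i j) = wt n s(i, j) := by
    funext k
    simp [Vmap, e, Pi.single_apply]
  refine Submodule.span_le.2 ?_
  rintro _ ⟨i, j, -, rfl⟩
  rw [SetLike.mem_coe, Llat, LinearMap.mem_ker, minorVec, map_sub, map_add, map_nsmul]
  funext k
  simp only [Vmap_e, wt, Sym2.lift_mk, Pi.sub_apply, Pi.add_apply, Pi.smul_apply, Pi.zero_apply]
  ring

theorem even_apply_of_mem_L'lat {d : Sym2 (Fin n) → ℤ} (hd : d ∈ L'lat n) {s : Sym2 (Fin n)}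
    (hs : ¬ s.IsDiag) : Even (d s) := by
  induction hd using Submodule.span_induction with
  | mem d hd =>
    obtain ⟨i, j, -, rfl⟩ := hd
    rw [minorVec_apply_of_not_isDiag i j hs]
    exact even_neg_two.mul_right _
  | zero => exact Even.zero
  | add d d' _ _ hd hd' => exact hd.add hd'
  | smul r d _ hd => exact hd.mul_left r

theorem mem_L'lat_iff {d : Sym2 (Fin n) → ℤ} :
    d ∈ L'lat n ↔ d ∈ Llat n ∧ ∀ s : Sym2 (Fin n), ¬ s.IsDiag → Even (d s) := by
  refine ⟨fun hd => ⟨L'lat_le_Llat hd, fun _ => even_apply_of_mem_L'lat hd⟩, ?_⟩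
  rintro ⟨hd, heven⟩
  -- Adding `(d_ij / 2) [ij|ij]` cancels the entry `d_ij`, which leaves a diagonal vector of `L_n`.
  let x : Sym2 (Fin n) → ℤ := ∑ s : Sym2 (Fin n), (d s / 2) • minorVec n s.inf s.sup
  have hx : x ∈ L'lat n :=
    Submodule.sum_mem _ fun s _ => Submodule.smul_mem _ _ (minorVec_mem_L'lat _ _)
  have e_inf_sup (s : Sym2 (Fin n)) : e n s.inf s.sup = Pi.single s 1 := by
    have mk_inf_sup : s(s.inf, s.sup) = s := Sym2.inf_eq_inf_and_sup_eq_sup.1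
      ⟨inf_of_le_left s.inf_le_sup, sup_of_le_right s.inf_le_sup⟩
    rw [e, mk_inf_sup]
  have off_diag (s : Sym2 (Fin n)) (hs : ¬ s.IsDiag) : (d + x) s = 0 := by
    have hxs : x s = -d s := calc
      x s = ∑ r, d r / 2 * (-2 * Pi.single (M := fun _ => ℤ) r 1 s) := by
        simp [x, Finset.sum_apply, minorVec_apply_of_not_isDiag _ _ hs, e_inf_sup]
      _ = d s / 2 * -2 := by simp [Pi.single_apply]
      _ = -d s := by have := (heven s hs).two_dvd; lia
    simp [hxs]
  rw [eq_neg_of_add_eq_zero_left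
    (eq_zero_of_mem_Llat (add_mem hd (L'lat_le_Llat hx)) off_diag)]
  exact neg_mem hx

end MinorLattice

section OddGraph

/-- The graph whose edges are the pairs `i ≠ j` at which the exponent vector `u` is odd. It is a
complete invariant of the class of `u` modulo `L'_n` within its fiber. -/
def oddGraph {V : Type*} (u : Sym2 V → ℕ) : SimpleGraph V :=
  SimpleGraph.fromEdgeSet {s | Odd (u s)}

variable {n}

theorem oddGraph_eq_iff {V : Type*} {u v : Sym2 V → ℕ} :
    oddGraph u = oddGraph v ↔ ∀ s : Sym2 V, ¬ s.IsDiag → (Odd (u s) ↔ Odd (v s)) := by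
  simp only [oddGraph, ← SimpleGraph.edgeSet_inj, SimpleGraph.edgeSet_fromEdgeSet, Set.ext_iff,
    Set.mem_sdiff, Set.mem_ofPred_eq, Sym2.mem_diagSet, and_congr_left_iff]

theorem toZ_sub_toZ_mem_L'lat_iff {u v : Sym2 (Fin n) →₀ ℕ} (huv : VN n u = VN n v) :
    toZ n u - toZ n v ∈ L'lat n ↔ oddGraph u = oddGraph v := by
  rw [mem_L'lat_iff, and_iff_right (toZ_sub_toZ_mem_Llat_iff.2 huv), oddGraph_eq_iff]
  refine forall₂_congr fun s _ => ?_
  rw [Pi.sub_apply, toZ, toZ, Int.even_sub, Int.even_coe_nat, Int.even_coe_nat,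
    ← Nat.not_odd_iff_even, ← Nat.not_odd_iff_even, not_iff_not]

open scoped Classical in
theorem degree_oddGraph_le (u : Sym2 (Fin n) →₀ ℕ) (i : Fin n) :
    (oddGraph u).degree i ≤ VN n u i := by
  rw [VN_apply, ← Nat.cast_id ((oddGraph u).degree i), cast_degree_eq_sum_compl]
  refine le_add_left (Finset.sum_le_sum fun j _ => ?_)
  split_ifs with hij
  · exact ((SimpleGraph.fromEdgeSet_adj _).1 hij).1.pos
  · exact Nat.zero_le _

theorem degreeParity_oddGraph (u : Sym2 (Fin n) →₀ ℕ) (i : Fin n) :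
    degreeParity (oddGraph u) i = VN n u i := by
  classical
  rw [degreeParity, cast_degree_eq_sum_compl, VN_apply, Nat.cast_add, Nat.cast_mul,
    ZMod.natCast_self, mul_zero, zero_add, Nat.cast_sum]
  refine Finset.sum_congr rfl fun j hj => ?_
  have hne : i ≠ j := by simpa [eq_comm] using hj
  simp only [oddGraph, SimpleGraph.fromEdgeSet_adj, Set.mem_ofPred_eq, and_iff_left hne]
  split_ifs with hodd
  · exact (ZMod.natCast_eq_one_iff_odd.2 hodd).symm
  · exact (ZMod.natCast_eq_zero_iff_even.2 (Nat.not_odd_iff_even.1 hodd)).symm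

open scoped Classical in
/-- The canonical representative with odd graph `G` in the fiber over `b`: its off-diagonal entries
are the adjacency matrix of `G`, and its diagonal supplies the rest of the degree `b`. It lies in
that fiber only if `b - G.degree` is nonnegative and even. -/
noncomputable def canonicalRep (G : SimpleGraph (Fin n)) (b : Fin n → ℕ) : Sym2 (Fin n) →₀ ℕ :=
  Finsupp.equivFunOnFinite.symm <| Sym2.lift
    ⟨fun i j => if i = j then (b i - G.degree i) / 2 else if G.Adj i j then 1 else 0, by
      intro i j
      obtain rfl | hij := eq_or_ne i j
      · rfl
      · simp only [hij, hij.symm, if_false, G.adj_comm]⟩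

open scoped Classical in
theorem canonicalRep_diag (G : SimpleGraph (Fin n)) (b : Fin n → ℕ) (i : Fin n) :
    canonicalRep G b s(i, i) = (b i - G.degree i) / 2 := by
  simp [canonicalRep]

open scoped Classical in
theorem canonicalRep_of_ne (G : SimpleGraph (Fin n)) (b : Fin n → ℕ) {i j : Fin n} (hij : i ≠ j) :
    canonicalRep G b s(i, j) = if G.Adj i j then 1 else 0 := by
  simp [canonicalRep, hij]

theorem oddGraph_canonicalRep (G : SimpleGraph (Fin n)) (b : Fin n → ℕ) :
    oddGraph (canonicalRep G b) = G := by
  ext i j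
  rw [oddGraph, SimpleGraph.fromEdgeSet_adj, Set.mem_ofPred_eq]
  obtain rfl | hij := eq_or_ne i j
  · simp
  · rw [canonicalRep_of_ne G b hij]
    split_ifs with h <;> simp [h, hij]

open scoped Classical in
theorem canonicalRep_mem_fiber {G : SimpleGraph (Fin n)} {b : Fin n → ℕ}
    (hle : ∀ i, G.degree i ≤ b i) (hparity : ∀ i, degreeParity G i = b i) :
    canonicalRep G b ∈ fiber n b := by
  funext i
  have hmod : G.degree i % 2 = b i % 2 := (ZMod.natCast_eq_natCast_iff' _ _ _).1 (hparity i)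
  have hsum : ∑ j ∈ {i}ᶜ, canonicalRep G b s(i, j) = G.degree i := by
    rw [← Nat.cast_id (G.degree i), cast_degree_eq_sum_compl]
    exact Finset.sum_congr rfl fun j hj => canonicalRep_of_ne G b (by simpa [eq_comm] using hj)
  rw [VN_apply, canonicalRep_diag, hsum]
  have := hle i
  lia

open scoped Classical in
theorem range_oddGraph_fiber (b : Fin n → ℕ) :
    Set.range (fun u : fiber n b => oddGraph u.1) =
      {G | ∀ i, G.degree i ≤ b i ∧ degreeParity G i = b i} := by
  ext G
  refine ⟨?_, fun hG => ?_⟩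
  · rintro ⟨⟨u, rfl⟩, rfl⟩ i
    exact ⟨degree_oddGraph_le u i, degreeParity_oddGraph u i⟩
  · exact ⟨⟨canonicalRep G b, canonicalRep_mem_fiber (fun i => (hG i).1) fun i => (hG i).2⟩,
      oddGraph_canonicalRep G b⟩

open scoped Classical in
theorem card_fiber_classes_eq_card_graphs (b : Fin n → ℕ) :
    Nat.card (Quot fun u v : fiber n b => toZ n u - toZ n v ∈ L'lat n) =
      Nat.card {G : SimpleGraph (Fin n) |
        ∀ i, G.degree i ≤ b i ∧ degreeParity G i = b i} := by
  have rel_iff (u v : fiber n b) :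
      toZ n u - toZ n v ∈ L'lat n ↔ Setoid.ker (fun u : fiber n b => oddGraph u.1) u v :=
    toZ_sub_toZ_mem_L'lat_iff (u.2.trans v.2.symm)
  rw [← range_oddGraph_fiber]
  exact Nat.card_congr ((Quot.congrRight rel_iff).trans (Setoid.quotientKerEquivRange _))

end OddGraph

/-- If `Σ b_i` is even and `b_i ≥ n-2` for all `i`, then the fiber
`V_n^{-1}[b]` has exactly `2^{c_{n-1}}` equivalence classes modulo `L'_n`. -/
theorem fiber_class_count (n : ℕ) (hn : 2 ≤ n) (b : Fin n → ℕ)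
    (hsum : Even (∑ i, b i)) (hb : ∀ i, n - 2 ≤ b i) :
    Nat.card (Quot fun u v : ↥(fiber n b) => toZ n ↑u - toZ n ↑v ∈ L'lat n) =
      2 ^ c (n - 1) := by
  have : Nonempty (Fin n) := ⟨⟨0, by lia⟩⟩
  have hsum_mod_two : ∑ i, (b i : ZMod 2) = 0 := by
    exact_mod_cast ZMod.natCast_eq_zero_iff_even.2 hsum
  have hdeg (i : Fin n) : Fintype.card (Fin n) - 2 ≤ b i := by simpa using hb i
  rw [card_fiber_classes_eq_card_graphs]
  simp only [forall_degree_le_and_degreeParity_eq_iff hdeg]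
  rw [card_degreeParity_eq hsum_mod_two, Nat.card_fin, c]

end Veronese
end

section
/- Let n ≥ 4 be even and set σ = (n−2)²/2 (this is c_{n−1} − (n−2)/2). Then, as elements of k[x]/J_n, x_{nn}^σ · p^+_n = p_n; that is, x_{nn}^σ · p^+_n − p_n ∈ J_n. -/
open scoped BigOperators

namespace Veronese

open MvPolynomial

variable (n : ℕ)

variable (k : Type*) [Field k]

/-!
Expanding `p_n` amounts to choosing the graph `H` on `[n-1]` of those pairs `i < j` at which the
summand `x_{ij} x_{nn}` is taken. The remaining pairs contribute `∏ i, x_{in} ^ d_i`, where `d_i`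
is the degree of `i` in the complement of `H`, and modulo `J_n` the relation
`x_{in}² = x_{ii} x_{nn}` turns `x_{in} ^ d_i` into
`x_{in} ^ (d_i % 2) * (x_{ii} x_{nn}) ^ (d_i / 2)`.
Each term is thereby a power of `x_{nn}` times a monomial with off-diagonal exponents at most `1`.
Conversely, such a monomial is determined by its Veronese degree and by the graph of the pairs in
`[n-1]` with exponent `1`, and the handshake lemma shows that the power of `x_{nn}` left over is
the same for all `H`.
-/

section Products

variable {V M : Type*} [Fintype V] [CommMonoid M]

lemma prod_sym2_fin_succ {m : ℕ} (f : Sym2 (Fin (m + 1)) → M) :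
    ∏ s, f s = f s(Fin.last m, Fin.last m) * (∏ i : Fin m, f s(i.castSucc, Fin.last m)) *
      ∏ s : Sym2 (Fin m), f (s.map Fin.castSucc) := by
  rw [← Finset.sym2_univ, Fin.univ_castSuccEmb, Finset.sym2_cons, Finset.prod_disjUnion,
    Finset.sym2_map]
  simp [Sym2.eq_swap]

lemma prod_sym2_eq_prod_diag_mul_prod_edgeFinset_top [DecidableEq V] (f : Sym2 V → M) :
    ∏ s, f s = (∏ i, f s(i, i)) * ∏ e ∈ (⊤ : SimpleGraph V).edgeFinset, f e := by
  rw [← Finset.prod_filter_mul_prod_filter_not Finset.univ Sym2.IsDiag]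
  congr 1
  · have hdiag : ({s | s.IsDiag} : Finset (Sym2 V)) = Finset.univ.image Sym2.diag := by
      ext s
      induction s with | _ i j => simp [Sym2.diag, eq_comm]
    rw [hdiag, Finset.prod_image Sym2.diag_injective.injOn]
    rfl
  · exact Finset.prod_congr (by ext; simp) fun _ _ => rfl

lemma prod_filter_lt_eq_prod_edgeFinset_top [LinearOrder V] (f : Sym2 V → M) :
    ∏ p : V × V with p.1 < p.2, f s(p.1, p.2) = ∏ e ∈ (⊤ : SimpleGraph V).edgeFinset, f e := by
  calc ∏ p : V × V with p.1 < p.2, f s(p.1, p.2)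
      = ∏ p ∈ (Finset.univ : Finset V).offDiag with p.1 < p.2, f s(p.1, p.2) :=
        Finset.prod_congr (by ext p; simpa using ne_of_lt) fun _ _ => rfl
    _ = ∏ e ∈ (Finset.univ : Finset V).sym2 with ¬e.IsDiag, f e :=
        (Finset.sum_sym2_filter_not_isDiag (M := Additive M) Finset.univ f).symm
    _ = ∏ e ∈ (⊤ : SimpleGraph V).edgeFinset, f e :=
        Finset.prod_congr (by ext; simp) fun _ _ => rfl

end Products

section Graphs

variable {V : Type*} [Fintype V] (H : SimpleGraph V) [DecidableRel H.Adj]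

lemma prod_edgeFinset_mul_map_eq_prod_pow_degree {M : Type*} [CommMonoid M] (y : V → M) :
    ∏ e ∈ H.edgeFinset, (e.map y).mul = ∏ i, y i ^ H.degree i := by
  classical
  have hmul : ∀ e ∈ H.edgeFinset, (e.map y).mul = ∏ i, if i ∈ e then y i else 1 := by
    intro e he
    induction e with | _ a b =>
    have hab : a ≠ b := H.ne_of_adj (by simpa using he)
    have hfilter : ({i | i ∈ s(a, b)} : Finset V) = {a, b} := by ext; simp
    rw [← Finset.prod_filter, hfilter, Finset.prod_pair hab, Sym2.map_mk, Sym2.mul_mk]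
  rw [Finset.prod_congr rfl hmul, Finset.prod_comm]
  refine Finset.prod_congr rfl fun i _ => ?_
  rw [← Finset.prod_filter, ← H.incidenceFinset_eq_filter, Finset.prod_const,
    H.card_incidenceFinset_eq_degree]

lemma edgeFinset_compl [DecidableEq V] :
    Hᶜ.edgeFinset = (⊤ : SimpleGraph V).edgeFinset \ H.edgeFinset := by
  ext e
  induction e
  simp

lemma card_edgeFinset_add_card_edgeFinset_compl [DecidableEq V] :
    H.edgeFinset.card + Hᶜ.edgeFinset.card = (Fintype.card V).choose 2 := by
  rw [edgeFinset_compl, add_comm, Finset.card_sdiff_add_card_eq_card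
    (SimpleGraph.edgeFinset_mono le_top), SimpleGraph.card_edgeFinset_top_eq_card_choose_two]

lemma sum_degree_mod_two_add_two_mul_sum_degree_div_two :
    ∑ i, H.degree i % 2 + 2 * ∑ i, H.degree i / 2 = 2 * H.edgeFinset.card := by
  rw [← H.sum_degrees_eq_twice_card_edges, Finset.mul_sum, ← Finset.sum_add_distrib]
  exact Finset.sum_congr rfl fun i _ => Nat.mod_add_div _ _

lemma two_mul_sub_add_sum_degree_mod_two {r : ℕ} (hr : Fintype.card V / 2 ≤ r) :
    2 * (r - (∑ i, H.degree i % 2) / 2) + ∑ i, H.degree i % 2 = 2 * r := by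
  have hle : ∑ i, H.degree i % 2 ≤ Fintype.card V := by
    simpa using Finset.sum_le_card_nsmul Finset.univ (fun i => H.degree i % 2) 1
      fun i _ => by omega
  have heven := sum_degree_mod_two_add_two_mul_sum_degree_div_two H
  omega

lemma degree_add_degree_compl [DecidableEq V] (i : V) :
    H.degree i + Hᶜ.degree i = Fintype.card V - 1 := by
  have hlt := H.degree_lt_card_verts i
  rw [H.degree_compl]
  omega

lemma add_sub_sum_degree_compl_mod_two [DecidableEq V] {σ r : ℕ}
    (hσ : σ + r = (Fintype.card V).choose 2) (hr : Fintype.card V / 2 ≤ r) :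
    σ + (r - (∑ i, Hᶜ.degree i % 2) / 2) = H.edgeFinset.card + ∑ i, Hᶜ.degree i / 2 := by
  have hdegree := sum_degree_mod_two_add_two_mul_sum_degree_div_two Hᶜ
  have hcard := card_edgeFinset_add_card_edgeFinset_compl H
  have hparity := two_mul_sub_add_sum_degree_mod_two Hᶜ hr
  omega

open scoped Classical in
lemma prod_edgeFinset_top_add [DecidableEq V] {S : Type*} [CommSemiring S] (a b : Sym2 V → S) :
    ∏ e ∈ (⊤ : SimpleGraph V).edgeFinset, (a e + b e) =
      ∑ H : SimpleGraph V, (∏ e ∈ H.edgeFinset, a e) * ∏ e ∈ Hᶜ.edgeFinset, b e := by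
  simp only [Finset.prod_add, edgeFinset_compl]
  symm
  refine Finset.sum_bij (fun H _ => H.edgeFinset) (fun H _ => ?_)
    (fun _ _ _ _ => SimpleGraph.edgeFinset_inj.mp) (fun T hT => ?_) fun _ _ => rfl
  · exact Finset.mem_powerset.mpr (SimpleGraph.edgeFinset_mono le_top)
  · refine ⟨SimpleGraph.fromEdgeSet T, Finset.mem_univ _, ?_⟩
    ext e
    have hdiag : e ∈ T → ¬e.IsDiag := fun he => by simpa using Finset.mem_powerset.mp hT he
    simpa using hdiag

end Graphs

lemma VN_eq_add_sum (n : ℕ) (u : Sym2 (Fin n) →₀ ℕ) (i : Fin n) :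
    VN n u i = u s(i, i) + ∑ j, u s(i, j) := by
  have hwt (s : Sym2 (Fin n)) :
      wtN n s i = (if s = s(i, i) then 1 else 0) + if i ∈ s then 1 else 0 := by
    induction s with | _ a b =>
    grind [wtN, Sym2.lift_mk, Sym2.eq_iff]
  have hstar : ({s | i ∈ s} : Finset (Sym2 (Fin n))) = Finset.univ.image fun j => s(i, j) := by
    ext s
    simp [Sym2.mem_iff_exists, eq_comm]
  have hinj : Function.Injective fun j => s(i, j) := fun _ _ => Sym2.congr_right.mp
  simp only [VN, hwt, mul_add, Finset.sum_add_distrib, mul_ite, mul_one, mul_zero,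
    Finset.sum_ite_eq', Finset.mem_univ, if_true]
  rw [← Finset.sum_filter, hstar, Finset.sum_image hinj.injOn]

section Border

variable {m : ℕ} {α : Type*} (A : Sym2 (Fin m) → α) (v : Fin m → α) (z : α)

/-- The symmetric `(m+1)×(m+1)` matrix with blocks `A`, `v`, `vᵀ`, `z`. Symmetric matrices are
encoded as functions of an unordered pair of indices. -/
def symBorder : Sym2 (Fin (m + 1)) → α :=
  Sym2.lift ⟨fun a b => Fin.lastCases (motive := fun _ => α)
      (Fin.lastCases (motive := fun _ => α) z v b)
      (fun i => Fin.lastCases (motive := fun _ => α) (v i) (fun j => A s(i, j)) b) a,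
    fun a b => by
      induction a using Fin.lastCases <;> induction b using Fin.lastCases <;> simp [Sym2.eq_swap]⟩

@[simp] lemma symBorder_castSucc_castSucc (i j : Fin m) :
    symBorder A v z s(i.castSucc, j.castSucc) = A s(i, j) := by
  simp [symBorder]

@[simp] lemma symBorder_castSucc_last (i : Fin m) :
    symBorder A v z s(i.castSucc, Fin.last m) = v i := by
  simp [symBorder]

@[simp] lemma symBorder_last_last : symBorder A v z s(Fin.last m, Fin.last m) = z := by
  simp [symBorder]

lemma symBorder_eta (f : Sym2 (Fin (m + 1)) → α) :
    symBorder (fun e => f (e.map Fin.castSucc)) (fun i => f s(i.castSucc, Fin.last m))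
      (f s(Fin.last m, Fin.last m)) = f := by
  ext s
  induction s with | _ a b =>
  induction a using Fin.lastCases <;> induction b using Fin.lastCases <;>
    simp [Sym2.eq_swap (a := Fin.last m)]

end Border

section GraphExponent

variable {m : ℕ} (r : ℕ) (H : SimpleGraph (Fin m)) [DecidableRel H.Adj]

/-- The exponent vector of the canonical monomial contributed to `p_n` by the graph `H` of those
edges at which the summand `x_{ij} x_{nn}` is chosen. The other edges yield `x_{in}` to the power
`Hᶜ.degree i`, reduced modulo `x_{in}² = x_{ii} x_{nn}`; the exponent of `x_{nn}` is normalised so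
that the last coordinate of the Veronese degree is `2 * r`. -/
noncomputable def graphExponent : Sym2 (Fin (m + 1)) →₀ ℕ :=
  Finsupp.equivFunOnFinite.symm <| symBorder
    (Sym2.lift ⟨fun i j => if i = j then Hᶜ.degree i / 2 else if H.Adj i j then 1 else 0,
      fun i j => by grind [H.adj_comm]⟩)
    (fun i => Hᶜ.degree i % 2) (r - (∑ i, Hᶜ.degree i % 2) / 2)

@[simp] lemma graphExponent_castSucc_self (i : Fin m) :
    graphExponent r H s(i.castSucc, i.castSucc) = Hᶜ.degree i / 2 := by
  simp [graphExponent]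

@[simp] lemma graphExponent_castSucc_last (i : Fin m) :
    graphExponent r H s(i.castSucc, Fin.last m) = Hᶜ.degree i % 2 := by
  simp [graphExponent]

@[simp] lemma graphExponent_last_last :
    graphExponent r H s(Fin.last m, Fin.last m) = r - (∑ i, Hᶜ.degree i % 2) / 2 := by
  simp [graphExponent]

lemma graphExponent_castSucc_of_ne {i j : Fin m} (hij : i ≠ j) :
    graphExponent r H s(i.castSucc, j.castSucc) = if H.Adj i j then 1 else 0 := by
  simp [graphExponent, hij]

open scoped Classical in
lemma graphExponent_injective :
    Function.Injective fun H : SimpleGraph (Fin m) => graphExponent r H := by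
  intro H H' h
  ext i j
  by_cases hij : i = j
  · simp [hij]
  · have hval := DFunLike.congr_fun h s(i.castSucc, j.castSucc)
    simp only [graphExponent_castSucc_of_ne _ _ hij] at hval
    grind

lemma graphExponent_le_one {s : Sym2 (Fin (m + 1))} (hs : ¬s.IsDiag) :
    graphExponent r H s ≤ 1 := by
  induction s with | _ a b =>
  induction a using Fin.lastCases with
  | last =>
    induction b using Fin.lastCases with
    | last => simp at hs
    | cast j =>
      rw [Sym2.eq_swap, graphExponent_castSucc_last]
      omega
  | cast i =>
    induction b using Fin.lastCases with
    | last =>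
      rw [graphExponent_castSucc_last]
      omega
    | cast j =>
      rw [graphExponent_castSucc_of_ne r H (by simpa using hs)]
      split_ifs <;> simp

lemma VN_last (u : Sym2 (Fin (m + 1)) →₀ ℕ) :
    VN (m + 1) u (Fin.last m) = 2 * u s(Fin.last m, Fin.last m) +
      ∑ i : Fin m, u s(i.castSucc, Fin.last m) := by
  rw [VN_eq_add_sum, Fin.sum_univ_castSucc]
  simp only [Sym2.eq_swap (a := Fin.last m)]
  ring

variable {r H}

lemma VN_castSucc {u : Sym2 (Fin (m + 1)) →₀ ℕ}
    (hu : ∀ i j, i ≠ j → u s(i.castSucc, j.castSucc) = if H.Adj i j then 1 else 0) (i : Fin m) :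
    VN (m + 1) u i.castSucc =
      2 * u s(i.castSucc, i.castSucc) + u s(i.castSucc, Fin.last m) + H.degree i := by
  have hrow : ∑ j : Fin m, u s(i.castSucc, j.castSucc) =
      u s(i.castSucc, i.castSucc) + H.degree i := by
    calc ∑ j : Fin m, u s(i.castSucc, j.castSucc)
        = ∑ j, ((if j = i then u s(i.castSucc, i.castSucc) else 0) +
            if H.Adj i j then 1 else 0) :=
          Finset.sum_congr rfl fun j _ => by
            by_cases hij : j = i
            · simp [hij]
            · simp [hij, hu i j (Ne.symm hij)]
      _ = u s(i.castSucc, i.castSucc) + H.degree i := by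
          simpa [Finset.sum_add_distrib] using (H.degree_eq_sum_if_adj (R := ℕ) i).symm
  rw [VN_eq_add_sum, Fin.sum_univ_castSucc, hrow]
  ring

lemma VN_graphExponent (hr : m / 2 ≤ r) :
    VN (m + 1) (graphExponent r H) = fun i => if i = Fin.last m then 2 * r else m - 1 := by
  funext i
  induction i using Fin.lastCases with
  | last =>
    simpa [VN_last] using two_mul_sub_add_sum_degree_mod_two Hᶜ (by simpa using hr)
  | cast i =>
    rw [VN_castSucc fun _ _ => graphExponent_castSucc_of_ne r H, if_neg i.castSucc_ne_last,
      graphExponent_castSucc_self, graphExponent_castSucc_last, Nat.div_add_mod, add_comm,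
      degree_add_degree_compl, Fintype.card_fin]

lemma eq_graphExponent {u : Sym2 (Fin (m + 1)) →₀ ℕ}
    (hVN : VN (m + 1) u = fun i => if i = Fin.last m then 2 * r else m - 1)
    (hadj : ∀ i j, i ≠ j → u s(i.castSucc, j.castSucc) = if H.Adj i j then 1 else 0)
    (hlast : ∀ i : Fin m, u s(i.castSucc, Fin.last m) ≤ 1) :
    u = graphExponent r H := by
  have hdegree (i : Fin m) :
      2 * u s(i.castSucc, i.castSucc) + u s(i.castSucc, Fin.last m) = Hᶜ.degree i := by
    have hVNi := congrFun hVN i.castSucc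
    have hcompl := degree_add_degree_compl H i
    simp only [VN_castSucc hadj, if_neg i.castSucc_ne_last] at hVNi
    rw [Fintype.card_fin] at hcompl
    omega
  have hmod (i : Fin m) : u s(i.castSucc, Fin.last m) = Hᶜ.degree i % 2 := by
    have := hdegree i
    have := hlast i
    omega
  have hdiv (i : Fin m) : u s(i.castSucc, i.castSucc) = Hᶜ.degree i / 2 := by
    have := hdegree i
    have := hlast i
    omega
  have hcorner : u s(Fin.last m, Fin.last m) = r - (∑ i, Hᶜ.degree i % 2) / 2 := by
    have hVNlast := congrFun hVN (Fin.last m)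
    simp only [VN_last, hmod, if_true] at hVNlast
    omega
  refine DFunLike.coe_injective ?_
  rw [graphExponent, Finsupp.coe_equivFunOnFinite_symm, ← symBorder_eta u, hcorner]
  congr 1
  · ext e
    induction e with | _ i j =>
    by_cases hij : i = j
    · simp [hij, hdiv]
    · simp [hij, hadj]
  · exact funext hmod

open scoped Classical in
lemma sum_canonical_eq_sum_graphExponent {M : Type*} [AddCommMonoid M] (hr : m / 2 ≤ r)
    (F : (Sym2 (Fin (m + 1)) →₀ ℕ) → M) :
    ∑ u ∈ fiberFinset (m + 1) (fun i => if i = Fin.last m then 2 * r else m - 1) with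
        ∀ s : Sym2 (Fin (m + 1)), ¬s.IsDiag → u s ≤ 1, F u =
      ∑ H : SimpleGraph (Fin m), F (graphExponent r H) := by
  symm
  refine Finset.sum_bij (fun H _ => graphExponent r H) (fun H _ => ?_)
    (fun _ _ _ _ h => graphExponent_injective r h) (fun u hu => ?_) fun _ _ => rfl
  · simp only [fiberFinset, fiber, Finset.mem_filter, Set.Finite.mem_toFinset, Set.mem_ofPred_eq]
    exact ⟨VN_graphExponent hr, fun s => graphExponent_le_one r H⟩
  · simp only [fiberFinset, fiber, Finset.mem_filter, Set.Finite.mem_toFinset,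
      Set.mem_ofPred_eq] at hu
    obtain ⟨hVN, hle⟩ := hu
    obtain ⟨H, hH⟩ : ∃ H : SimpleGraph (Fin m), ∀ i j, i ≠ j →
        (H.Adj i j ↔ u s(i.castSucc, j.castSucc) = 1) :=
      ⟨.fromEdgeSet {e | u (e.map Fin.castSucc) = 1}, fun i j hij => by simp [hij]⟩
    refine ⟨H, Finset.mem_univ _, (eq_graphExponent hVN (fun i j hij => ?_) fun i => ?_).symm⟩
    · have := hle s(i.castSucc, j.castSucc) (by simpa using hij)
      grind
    · exact hle _ (by simp [Fin.castSucc_ne_last])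

variable {S : Type*} [CommSemiring S] (x : Sym2 (Fin (m + 1)) → S)

lemma prod_pow_graphExponent :
    ∏ s, x s ^ graphExponent r H s =
      x s(Fin.last m, Fin.last m) ^ (r - (∑ i, Hᶜ.degree i % 2) / 2) *
      (∏ i : Fin m, x s(i.castSucc, Fin.last m) ^ (Hᶜ.degree i % 2)) *
      ((∏ i : Fin m, x s(i.castSucc, i.castSucc) ^ (Hᶜ.degree i / 2)) *
        ∏ e ∈ H.edgeFinset, x (e.map Fin.castSucc)) := by
  have hedges : ∏ e ∈ (⊤ : SimpleGraph (Fin m)).edgeFinset,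
      x (e.map Fin.castSucc) ^ graphExponent r H (e.map Fin.castSucc) =
        ∏ e ∈ H.edgeFinset, x (e.map Fin.castSucc) := by
    refine (Finset.prod_subset_one_on_sdiff (SimpleGraph.edgeFinset_mono le_top)
      (fun e he => ?_) fun e he => ?_).symm
    · induction e with | _ i j =>
      have hij : i ≠ j ∧ ¬H.Adj i j := by simpa using he
      rw [Sym2.map_mk, graphExponent_castSucc_of_ne r H hij.1, if_neg hij.2, pow_zero]
    · induction e with | _ i j =>
      have hij : H.Adj i j := by simpa using he
      rw [Sym2.map_mk, graphExponent_castSucc_of_ne r H hij.ne, if_pos hij, pow_one]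
  rw [prod_sym2_fin_succ, prod_sym2_eq_prod_diag_mul_prod_edgeFinset_top, hedges]
  simp

lemma pow_mul_prod_pow_graphExponent {σ : ℕ} (hσ : σ + r = m.choose 2) (hr : m / 2 ≤ r)
    (hx : ∀ i : Fin m, x s(i.castSucc, Fin.last m) ^ 2 =
      x s(i.castSucc, i.castSucc) * x s(Fin.last m, Fin.last m)) :
    x s(Fin.last m, Fin.last m) ^ σ * ∏ s, x s ^ graphExponent r H s =
      (∏ e ∈ H.edgeFinset, x (e.map Fin.castSucc) * x s(Fin.last m, Fin.last m)) *
        ∏ e ∈ Hᶜ.edgeFinset, (e.map fun i => x s(i.castSucc, Fin.last m)).mul := by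
  have hpow (i : Fin m) : x s(i.castSucc, Fin.last m) ^ Hᶜ.degree i =
      x s(i.castSucc, Fin.last m) ^ (Hᶜ.degree i % 2) *
        (x s(i.castSucc, i.castSucc) ^ (Hᶜ.degree i / 2) *
          x s(Fin.last m, Fin.last m) ^ (Hᶜ.degree i / 2)) := by
    rw [← mul_pow, ← hx, ← pow_mul, ← pow_add, Nat.mod_add_div]
  have hexp := add_sub_sum_degree_compl_mod_two H (σ := σ) (r := r)
    (by simpa using hσ) (by simpa using hr)
  rw [prod_pow_graphExponent, prod_edgeFinset_mul_map_eq_prod_pow_degree,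
    Finset.prod_congr rfl fun i _ => hpow i]
  simp only [Finset.prod_mul_distrib, Finset.prod_const, Finset.prod_pow_eq_pow_sum]
  rw [mul_assoc (_ ^ _), ← mul_assoc, ← pow_add, hexp, pow_add]
  ring

lemma pow_mul_sum_canonical_eq_prod {σ : ℕ} (hσ : σ + r = m.choose 2) (hr : m / 2 ≤ r)
    (hx : ∀ i : Fin m, x s(i.castSucc, Fin.last m) ^ 2 =
      x s(i.castSucc, i.castSucc) * x s(Fin.last m, Fin.last m)) :
    x s(Fin.last m, Fin.last m) ^ σ *
      ∑ u ∈ fiberFinset (m + 1) (fun i => if i = Fin.last m then 2 * r else m - 1) with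
        ∀ s : Sym2 (Fin (m + 1)), ¬s.IsDiag → u s ≤ 1, ∏ s, x s ^ u s =
      ∏ p : Fin m × Fin m with p.1 < p.2,
        (x s(p.1.castSucc, p.2.castSucc) * x s(Fin.last m, Fin.last m) +
          x s(p.1.castSucc, Fin.last m) * x s(p.2.castSucc, Fin.last m)) := by
  classical
  calc
    _ = ∑ H : SimpleGraph (Fin m), x s(Fin.last m, Fin.last m) ^ σ *
          ∏ s, x s ^ graphExponent r H s := by
        rw [sum_canonical_eq_sum_graphExponent hr, Finset.mul_sum]
    _ = ∏ e ∈ (⊤ : SimpleGraph (Fin m)).edgeFinset,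
          (x (e.map Fin.castSucc) * x s(Fin.last m, Fin.last m) +
            (e.map fun i => x s(i.castSucc, Fin.last m)).mul) := by
        rw [prod_edgeFinset_top_add]
        exact Finset.sum_congr rfl fun H _ => pow_mul_prod_pow_graphExponent x hσ hr hx
    _ = _ := (prod_filter_lt_eq_prod_edgeFinset_top _).symm

end GraphExponent

lemma two_mul_sq_div_two_add_eq_choose_two (r : ℕ) :
    (2 * r) ^ 2 / 2 + r = (2 * r + 1).choose 2 := by
  have hsq : (2 * r) ^ 2 = 2 * (2 * r ^ 2) := by ring
  have hprod : (2 * r + 1) * (2 * r) = 2 * (2 * r ^ 2 + r) := by ring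
  rw [Nat.choose_two_right, Nat.add_sub_cancel, hprod, hsq]
  simp

/-- For odd `n ≥ 3` and `r = (n - 1) / 2`, the sum is `pplusOdd n k (lastIdx n hn)`. -/
theorem xnn_pow_mul_pplus_even_general {n : ℕ} (hn : 0 < n) {r σ : ℕ}
    (hr : (n - 1) / 2 ≤ r) (hσ : σ + r = (n - 1).choose 2) (k : Type*) [Field k] :
    X s(lastIdx n hn, lastIdx n hn) ^ σ *
        pplusAt n k (fun i => if i = lastIdx n hn then 2 * r else n - 2) - pn n k hn ∈
      Jideal n k := by
  obtain ⟨m, rfl⟩ : ∃ m, n = m + 1 := ⟨n - 1, by omega⟩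
  have hx (i : Fin m) : Ideal.Quotient.mk (Jideal (m + 1) k) (X s(i.castSucc, Fin.last m)) ^ 2 =
      Ideal.Quotient.mk (Jideal (m + 1) k) (X s(i.castSucc, i.castSucc)) *
        Ideal.Quotient.mk (Jideal (m + 1) k) (X s(Fin.last m, Fin.last m)) := by
    rw [← map_pow, ← map_mul, eq_comm, Ideal.Quotient.eq]
    exact Ideal.subset_span ⟨i.castSucc, Fin.last m, Fin.castSucc_lt_last i, rfl⟩
  rw [← Ideal.Quotient.eq]
  simp only [pplusAt, pn, monomial_eq, map_one, one_mul,
    Finsupp.prod_fintype _ _ fun _ => pow_zero _, map_mul, map_add, map_sum, map_prod, map_pow]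
  -- After `n = m + 1`, `lastIdx` and `ι` unfold to `Fin.last m` and `Fin.castSucc`.
  exact pow_mul_sum_canonical_eq_prod (fun s => Ideal.Quotient.mk (Jideal (m + 1) k) (X s)) hσ hr hx

/-- For even `n ≥ 4`, with `σ = (n-2)²/2`:
`x_{nn}^σ · p⁺_n = p_n` in `k[x]/J_n`. -/
theorem xnn_pow_mul_pplus_even (n : ℕ) (hn : 4 ≤ n) (heven : Even n)
    (k : Type*) [Field k] :
    X s(lastIdx n (by omega), lastIdx n (by omega)) ^ ((n - 2) ^ 2 / 2) *
        pplusEven n k - pn n k (by omega) ∈ Jideal n k := by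
  obtain ⟨r, rfl⟩ : ∃ r, n = 2 * r + 2 := ⟨(n - 2) / 2, by grind⟩
  simpa [pplusEven] using xnn_pow_mul_pplus_even_general (n := 2 * r + 2) (by omega)
    (by omega : (2 * r + 1) / 2 ≤ r) (two_mul_sq_div_two_add_eq_choose_two r) k

end Veronese
end
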